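/- arXiv:1408.0269 — 8 statements merged into one kernel-verified Lean document; each statement's English description precedes it below -/
import Mathlib

section
/- Let k be a field of characteristic different from 2 and let g ∈ k[x,y,z] be homogeneous of degree 4 such that the plane quartic B : g = 0 is smooth, i.e. over an algebraic closure k̄ the polynomials g, ∂g/∂x, ∂g/∂y, ∂g/∂z have no common zero (x₀,y₀,z₀) ≠ (0,0,0). Let X be the del Pezzo surface of degree 2 given by w² = g in P(1,1,1,2). Let d ≥ 1 be an integer and let p, q, r ∈ k[s,t] be homogeneous of degree d with no nonconstant common factor, and set G = g(p,q,r) ∈ k[s,t]. Assume that G ≠ 0, that G is the square of a polynomial in k̄[s,t], and that there exists (s₀,t₀) ∈ k² such that G(s₀,t₀) is a nonzero square in k. Then X is unirational over k: there exist u, v, ω ∈ k(s,t) with u and v algebraically independent over k and ω² = g(u,v,1). -/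
open MvPolynomial

/-!
Restricting to a line through `(s₀, t₀)`, where `g` takes a nonzero square value, and removing
inseparability gives a parametrization `P(t)` of the curve over `k` with `g(P) = H²` for some
`H ∈ k[t]` and a nonzero Wronskian of two coordinates. On the line `m P + V` through `P` in a
direction `V`, completing the square at the end `m = ∞` gives `g(m P + V) = Q(m)² + e (α m + β)`
with `Q` quadratic in `m`; at `m = -β / α` the quartic form is a square, so the residual point
`β P - α V` lifts to the surface `w² = g`.

It remains to choose `V` so that the residual point is generic. Before cancellation of the common
factor `e`, the two coefficients are forms `A`, `D` in `V` of degrees 3 and 4. A common zero is a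
direction in which the line is everywhere tangent to the branch curve; differentiating there,
smoothness of the branch curve shows that such a zero is simple and unique, so that `α` still has
degree at least 2 along a line of directions. If a form `f` over `k` vanishes at `β P - α V`,
Taylor expansion modulo `α²` shows that `f` vanishes to second order at `P`, and differentiating
along the curve (`P` is separable over `k`) forces `f = 0`.
-/

namespace DelPezzoUnirational

section Evaluation

variable {σ k S : Type*} [CommRing k] [CommRing S] [Algebra k S]

theorem aeval_smul_of_isHomogeneous {f : MvPolynomial σ k} {n : ℕ} (hf : f.IsHomogeneous n)
    (c : S) (x : σ → S) : aeval (c • x) f = c ^ n * aeval x f := by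
  rw [aeval_def, aeval_def, eval₂_eq, eval₂_eq, Finset.mul_sum]
  refine Finset.sum_congr rfl fun d hd ↦ ?_
  have hprod : ∏ i ∈ d.support, c ^ d i = c ^ n := by
    rw [Finset.prod_pow_eq_pow_sum, ← hf.degree_eq_sum_deg_support hd]
  simp only [Pi.smul_apply, smul_eq_mul, mul_pow, Finset.prod_mul_distrib, hprod]
  ring

theorem derivation_aeval [Fintype σ] {M : Type*} [AddCommGroup M] [Module S M] [Module k M]
    [IsScalarTower k S M] (d : Derivation k S M) (x : σ → S) (f : MvPolynomial σ k) :
    d (aeval x f) = ∑ i, aeval x (pderiv i f) • d (x i) := by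
  classical
  induction f using MvPolynomial.induction_on with
  | C a => simp
  | add p q hp hq => simp [hp, hq, add_smul, Finset.sum_add_distrib]
  | mul_X p j hp =>
    simp [hp, pderiv_X, Pi.single_apply, add_smul, Finset.sum_add_distrib, Finset.smul_sum,
      mul_smul, apply_ite (aeval x), ite_smul]

theorem aeval_add_of_mul_eq_zero [Fintype σ] (a b : σ → S) (hb : ∀ i j, b i * b j = 0)
    (f : MvPolynomial σ k) :
    aeval (a + b) f = aeval a f + ∑ i, b i * aeval a (pderiv i f) := by
  classical
  induction f using MvPolynomial.induction_on with
  | C a => simp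
  | add p q hp hq => simp only [map_add, hp, hq, mul_add, Finset.sum_add_distrib]; ring
  | mul_X p j hp =>
    have hbj : (∑ i, b i * aeval a (pderiv i p)) * b j = 0 := by
      rw [Finset.sum_mul]
      exact Finset.sum_eq_zero fun i _ ↦ by rw [mul_right_comm, hb, zero_mul]
    have hderiv : ∑ i, b i * aeval a (pderiv i (p * X j)) =
        (∑ i, b i * aeval a (pderiv i p)) * a j + aeval a p * b j := by
      simp [pderiv_X, Pi.single_apply, mul_add, Finset.sum_add_distrib, Finset.mul_sum,
        apply_ite (aeval a), add_comm, mul_left_comm, mul_comm]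
    rw [hderiv, map_mul, map_mul, aeval_X, aeval_X, hp, Pi.add_apply]
    linear_combination hbj

theorem sum_mul_aeval_pderiv_of_isHomogeneous [Fintype σ] {f : MvPolynomial σ k} {n : ℕ}
    (hf : f.IsHomogeneous n) (x : σ → S) :
    ∑ i, x i * aeval x (pderiv i f) = n * aeval x f := by
  simpa using congrArg (aeval x) hf.sum_X_mul_pderiv

end Evaluation

section Nonsingular

variable {σ k : Type*} [Field k]

/-- The form `g` has no nontrivial zero over `N` at which all its partial derivatives vanish; for
`N` algebraically closed, the hypersurface `g = 0` in projective space is smooth. The derivatives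
do not determine `g` through Euler's identity in small characteristic, so `g = 0` is imposed. -/
def HasNoSingularZero (g : MvPolynomial σ k) (N : Type*) [CommRing N] [Algebra k N] : Prop :=
  ∀ x : σ → N, aeval x g = 0 → (∀ i, aeval x (pderiv i g) = 0) → x = 0

theorem hasNoSingularZero_iff_eval {N : Type*} [CommRing N] [Algebra k N] {g : MvPolynomial σ k} :
    HasNoSingularZero g N ↔ ¬ ∃ x : σ → N, x ≠ 0 ∧ eval x (map (algebraMap k N) g) = 0 ∧
      ∀ i, eval x (pderiv i (map (algebraMap k N) g)) = 0 := by
  simp only [HasNoSingularZero, pderiv_map, eval_map, ← aeval_def, not_exists, not_and]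
  exact forall_congr' fun x ↦ by tauto

theorem hasNoSingularZero_rename {τ N : Type*} [CommRing N] [Algebra k N] {g : MvPolynomial σ k}
    (hg : HasNoSingularZero g N) (e : σ ≃ τ) : HasNoSingularZero (rename e g) N := by
  intro x hx hx'
  have hxe : x ∘ e = 0 := by
    refine hg (x ∘ e) (by rwa [aeval_rename] at hx) fun i ↦ ?_
    simpa only [pderiv_rename e.injective, aeval_rename] using hx' (e i)
  funext i
  simpa using congrFun hxe (e.symm i)

/-- By the Nullstellensatz each coordinate has a power in the ideal of the singular locus. -/
theorem HasNoSingularZero.of_algebraicClosure [Finite σ] {g : MvPolynomial σ k}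
    (hg : HasNoSingularZero g (AlgebraicClosure k)) (N : Type*) [Field N] [Algebra k N] :
    HasNoSingularZero g N := by
  intro x hx hx'
  set I := Ideal.span (insert g (Set.range fun i ↦ pderiv i g))
  have hX (i : σ) : X i ∈ I.radical := by
    rw [← vanishingIdeal_zeroLocus_eq_radical (K := AlgebraicClosure k), mem_vanishingIdeal_iff]
    intro y hy
    rw [mem_zeroLocus_iff] at hy
    have hy0 : y = 0 := hg y (hy g (Ideal.subset_span (Set.mem_insert _ _)))
      fun j ↦ hy _ (Ideal.subset_span (Set.mem_insert_of_mem _ ⟨j, rfl⟩))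
    simp [hy0]
  have hI : I ≤ RingHom.ker (aeval x : MvPolynomial σ k →ₐ[k] N) := by
    rw [Ideal.span_le, Set.insert_subset_iff, Set.range_subset_iff]
    exact ⟨hx, hx'⟩
  funext i
  obtain ⟨n, hn⟩ := hX i
  exact eq_zero_of_pow_eq_zero (n := n) (by simpa using hI hn)

end Nonsingular

section GenericPoint

variable {k L : Type*} [Field k] [Field L] [Algebra k L]

/-- The point of projective space with homogeneous coordinates `Q` is generic over `k`: no nonzero
form over `k` vanishes at it. Unlike algebraic independence of the affine coordinates in a chart,
this is visibly invariant under permutations and scaling of the coordinates. -/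
def IsGenericPoint {σ : Type*} (k : Type*) {L : Type*} [Field k] [Field L] [Algebra k L]
    (Q : σ → L) : Prop :=
  ∀ (n : ℕ) (f : MvPolynomial σ k), f.IsHomogeneous n → aeval Q f = 0 → f = 0

theorem IsGenericPoint.comp_equiv {σ τ : Type*} {Q : σ → L} (hQ : IsGenericPoint k Q)
    (e : τ ≃ σ) : IsGenericPoint k (Q ∘ e) := by
  intro n f hf hf0
  rw [← aeval_rename] at hf0
  exact (rename_eq_zero_iff_of_injective _ e.injective).mp (hQ n _ hf.rename_isHomogeneous hf0)

theorem IsGenericPoint.apply_ne_zero {σ : Type*} {Q : σ → L} (hQ : IsGenericPoint k Q) (i : σ) :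
    Q i ≠ 0 := fun h ↦ X_ne_zero i (hQ 1 (X i) (isHomogeneous_X k i) (by rwa [aeval_X]))

/-- Dehomogenization of ternary forms in the chart where the last coordinate is `1`. -/
noncomputable def dehomogenize (k : Type*) [Field k] :
    MvPolynomial (Fin 3) k →ₐ[k] MvPolynomial (Fin 2) k :=
  aeval ![X 0, X 1, 1]

theorem aeval_dehomogenize (x y : L) (f : MvPolynomial (Fin 3) k) :
    aeval ![x, y] (dehomogenize k f) = aeval ![x, y, 1] f := by
  rw [dehomogenize, ← AlgHom.comp_apply, comp_aeval]
  congr 2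
  funext i
  fin_cases i <;> simp

theorem aeval_eq_pow_mul_aeval_dehomogenize {f : MvPolynomial (Fin 3) k} {n : ℕ}
    (hf : f.IsHomogeneous n) (Q : Fin 3 → L) (hQ : Q 2 ≠ 0) :
    aeval Q f = Q 2 ^ n * aeval ![Q 0 / Q 2, Q 1 / Q 2] (dehomogenize k f) := by
  rw [aeval_dehomogenize, ← aeval_smul_of_isHomogeneous hf]
  congr 2
  funext i
  fin_cases i <;> simp [mul_div_cancel₀, hQ]

theorem eq_zero_of_dehomogenize_eq_zero {f : MvPolynomial (Fin 3) k} {n : ℕ}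
    (hf : f.IsHomogeneous n) (h : dehomogenize k f = 0) : f = 0 := by
  set M := FractionRing (MvPolynomial (Fin 3) k)
  set x : Fin 3 → M := algebraMap (MvPolynomial (Fin 3) k) M ∘ X
  have hinj := IsFractionRing.injective (MvPolynomial (Fin 3) k) M
  have hx : algebraMap _ M f = aeval x f := by
    rw [aeval_algebraMap_apply, aeval_X_left_apply]
  have hx2 : x 2 ≠ 0 := (map_ne_zero_iff _ hinj).mpr (X_ne_zero 2)
  rw [← map_eq_zero_iff _ hinj, hx, aeval_eq_pow_mul_aeval_dehomogenize hf x hx2, h, map_zero,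
    mul_zero]

theorem exists_isHomogeneous_dehomogenize_eq (f : MvPolynomial (Fin 2) k) :
    ∃ (n : ℕ) (F : MvPolynomial (Fin 3) k), F.IsHomogeneous n ∧ dehomogenize k F = f := by
  refine ⟨f.totalDegree, ∑ i ∈ Finset.range (f.totalDegree + 1),
    X 2 ^ (f.totalDegree - i) * rename ![0, 1] (homogeneousComponent i f), ?_, ?_⟩
  · refine IsHomogeneous.sum _ _ _ fun i hi ↦ ?_
    have hi' : f.totalDegree - i + i = f.totalDegree :=
      Nat.sub_add_cancel (Finset.mem_range_succ_iff.mp hi)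
    simpa only [hi'] using (isHomogeneous_X_pow (2 : Fin 3) (f.totalDegree - i)).mul
      (homogeneousComponent_isHomogeneous i f).rename_isHomogeneous
  · have hX : (![X 0, X 1, 1] : Fin 3 → MvPolynomial (Fin 2) k) ∘ ![0, 1] = X := by
      funext i
      fin_cases i <;> rfl
    simp [dehomogenize, bind₁_rename, hX, sum_homogeneousComponent]

theorem isGenericPoint_iff_algebraicIndependent {Q : Fin 3 → L} (hQ : Q 2 ≠ 0) :
    IsGenericPoint k Q ↔ AlgebraicIndependent k ![Q 0 / Q 2, Q 1 / Q 2] := by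
  rw [algebraicIndependent_iff]
  refine ⟨fun h f hf ↦ ?_, fun h n f hf hf0 ↦ ?_⟩
  · obtain ⟨n, F, hF, rfl⟩ := exists_isHomogeneous_dehomogenize_eq f
    rw [h n F hF (by rw [aeval_eq_pow_mul_aeval_dehomogenize hF Q hQ, hf, mul_zero]), map_zero]
  · rw [aeval_eq_pow_mul_aeval_dehomogenize hf Q hQ] at hf0
    exact eq_zero_of_dehomogenize_eq_zero hf
      (h _ ((mul_eq_zero.mp hf0).resolve_left (pow_ne_zero n hQ)))

end GenericPoint

section Line

variable {σ k S : Type*} [CommRing k] [CommRing S] [Algebra k S]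

/-- The point `P * m + V` of the line through `P` and `V`, with the parameter `m` as polynomial
variable. -/
noncomputable def linePoint (P V : σ → S) (i : σ) : Polynomial S :=
  Polynomial.C (P i) * Polynomial.X + Polynomial.C (V i)

theorem natDegree_prod_linePoint_pow_le_and_coeff (P V : σ → S) (s : Finset σ) (d : σ → ℕ) :
    (∏ i ∈ s, linePoint P V i ^ d i).natDegree ≤ ∑ i ∈ s, d i ∧
      (∏ i ∈ s, linePoint P V i ^ d i).coeff (∑ i ∈ s, d i) = ∏ i ∈ s, P i ^ d i := by
  classical
  have hdeg (i : σ) : (linePoint P V i).natDegree ≤ 1 := Polynomial.natDegree_linear_le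
  have hpow (i : σ) : (linePoint P V i ^ d i).natDegree ≤ d i := by
    simpa using Polynomial.natDegree_pow_le_of_le (d i) (hdeg i)
  have hcoeff (i : σ) : (linePoint P V i ^ d i).coeff (d i) = P i ^ d i := by
    simpa [linePoint] using Polynomial.coeff_pow_of_natDegree_le (m := d i) (hdeg i)
  induction s using Finset.induction_on with
  | empty => simp
  | insert i s hi ih =>
    rw [Finset.prod_insert hi, Finset.sum_insert hi, Finset.prod_insert hi,
      Polynomial.coeff_mul_add_eq_of_natDegree_le (hpow i) ih.1, hcoeff, ih.2]
    exact ⟨Polynomial.natDegree_mul_le_of_le (hpow i) ih.1, rfl⟩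

theorem natDegree_aeval_linePoint_le {f : MvPolynomial σ k} {n : ℕ} (hf : f.IsHomogeneous n)
    (P V : σ → S) : (aeval (linePoint P V) f).natDegree ≤ n := by
  rw [aeval_def, eval₂_eq]
  refine Polynomial.natDegree_sum_le_of_forall_le _ _ fun d hd ↦ ?_
  rw [hf.degree_eq_sum_deg_support hd, Polynomial.algebraMap_apply]
  exact (Polynomial.natDegree_C_mul_le _ _).trans
    (natDegree_prod_linePoint_pow_le_and_coeff P V d.support d).1

theorem coeff_aeval_linePoint {f : MvPolynomial σ k} {n : ℕ} (hf : f.IsHomogeneous n)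
    (P V : σ → S) : (aeval (linePoint P V) f).coeff n = aeval P f := by
  rw [aeval_def, aeval_def, eval₂_eq, eval₂_eq, Polynomial.finsetSum_coeff]
  refine Finset.sum_congr rfl fun d hd ↦ ?_
  rw [hf.degree_eq_sum_deg_support hd, Polynomial.algebraMap_apply, Polynomial.coeff_C_mul,
    (natDegree_prod_linePoint_pow_le_and_coeff P V d.support d).2]

theorem map_linePoint {S' : Type*} [CommRing S'] (φ : S →+* S') (P V : σ → S) (i : σ) :
    (linePoint P V i).map φ = linePoint (φ ∘ P) (φ ∘ V) i := by
  simp [linePoint]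

theorem map_aeval_linePoint {S' : Type*} [CommRing S'] [Algebra k S'] (φ : S →ₐ[k] S')
    (P V : σ → S) (f : MvPolynomial σ k) :
    (aeval (linePoint P V) f).map (φ : S →+* S') = aeval (linePoint (φ ∘ P) (φ ∘ V)) f := by
  rw [← Polynomial.coe_mapAlgHom, ← AlgHom.comp_apply, comp_aeval]
  congr 2
  funext i
  exact map_linePoint (φ : S →+* S') P V i

theorem eval_aeval_linePoint (P V : σ → S) (m : S) (f : MvPolynomial σ k) :
    (aeval (linePoint P V) f).eval m = aeval (m • P + V) f := by
  rw [← Polynomial.coe_aeval_eq_eval, ← AlgHom.coe_restrictScalars' k, ← AlgHom.comp_apply,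
    comp_aeval]
  congr 2
  funext i
  simp [AlgHom.coe_restrictScalars', Polynomial.coe_aeval_eq_eval, linePoint, mul_comm m]

end Line

section CompletingTheSquare

variable {k K : Type*} [CommRing k] [Field K] [Algebra k K]

theorem finSuccEquiv_rename_succ {R : Type*} [CommRing R] {N : ℕ} (p : MvPolynomial (Fin N) R) :
    finSuccEquiv R N (rename Fin.succ p) = Polynomial.C p := by
  induction p using MvPolynomial.induction_on with
  | C a => rw [rename_C, finSuccEquiv_apply, eval₂Hom_C, RingHom.comp_apply]
  | add p q hp hq => rw [map_add, map_add, hp, hq, map_add]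
  | mul_X p i hp => rw [map_mul, map_mul, hp, rename_X, finSuccEquiv_X_succ, map_mul]

theorem isHomogeneous_coeff_aeval_linePoint {σ : Type*} {N : ℕ} {f : MvPolynomial σ k} {n : ℕ}
    (hf : f.IsHomogeneous n) (P : σ → K) {V : σ → MvPolynomial (Fin N) K}
    (hV : ∀ i, (V i).IsHomogeneous 1) (i j : ℕ) (hij : i + j = n) :
    ((aeval (linePoint (C ∘ P) V) f).coeff i).IsHomogeneous j := by
  set ℓ : σ → MvPolynomial (Fin (N + 1)) K := fun i ↦ C (P i) * X 0 + rename Fin.succ (V i)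
  have hℓ (i : σ) : finSuccEquiv K N (ℓ i) = linePoint (C ∘ P) V i := by
    rw [map_add, map_mul, ← rename_C Fin.succ, finSuccEquiv_rename_succ, finSuccEquiv_rename_succ,
      finSuccEquiv_X_zero, linePoint, Function.comp_apply]
  have hℓhom (i : σ) : (ℓ i).IsHomogeneous 1 :=
    (isHomogeneous_C_mul_X _ _).add (hV i).rename_isHomogeneous
  have hhom : (aeval ℓ f).IsHomogeneous n := by
    rw [← aeval_map_algebraMap K]
    simpa using (hf.map (algebraMap k K)).aeval ℓ hℓhom
  have heq : aeval (linePoint (C ∘ P) V) f = finSuccEquiv K N (aeval ℓ f) := by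
    rw [← aeval_map_algebraMap K, ← aeval_map_algebraMap K ℓ, ← AlgEquiv.coe_toAlgHom,
      ← AlgHom.comp_apply, comp_aeval]
    simp only [AlgEquiv.coe_toAlgHom, hℓ]
  rw [heq]
  exact hhom.finSuccEquiv_coeff_isHomogeneous i j hij

/-- Completing the square in `m`, with `H * m ^ 2` as leading term. -/
theorem exists_eq_sq_add_of_natDegree_le_four {σ : Type*} (h2 : (2 : K) ≠ 0) {H : K} (hH : H ≠ 0)
    {F : Polynomial (MvPolynomial σ K)} (hF : F.natDegree ≤ 4) (hF4 : F.coeff 4 = C (H ^ 2))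
    (hhom : ∀ i j, i + j = 4 → (F.coeff i).IsHomogeneous j) :
    ∃ (Q : Polynomial (MvPolynomial σ K)) (A D : MvPolynomial σ K),
      F = Q ^ 2 + Polynomial.C A * Polynomial.X + Polynomial.C D ∧
      Q.coeff 2 = C H ∧ A.IsHomogeneous 3 ∧ D.IsHomogeneous 4 := by
  set h' : MvPolynomial σ K := C (2 * H)⁻¹
  set b := h' * F.coeff 3
  set c := h' * (F.coeff 2 - b ^ 2)
  have hh' : 2 * C H * h' = 1 := by
    rw [← map_ofNat C 2, ← C_mul, ← C_mul, mul_inv_cancel₀ (mul_ne_zero h2 hH), C_1]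
  have hb : b.IsHomogeneous 1 := (hhom 3 1 rfl).C_mul _
  have hc : c.IsHomogeneous 2 := ((hhom 2 2 rfl).sub (hb.pow 2)).C_mul _
  refine ⟨Polynomial.C (C H) * Polynomial.X ^ 2 + Polynomial.C b * Polynomial.X + Polynomial.C c,
    F.coeff 1 - 2 * (b * c), F.coeff 0 - c ^ 2, ?_, ?_, ?_, ?_⟩
  · have hb3 : 2 * C H * b = F.coeff 3 := by linear_combination F.coeff 3 * hh'
    have hc2 : b ^ 2 + 2 * C H * c = F.coeff 2 := by
      linear_combination (F.coeff 2 - b ^ 2) * hh'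
    conv_lhs => rw [F.as_sum_range_C_mul_X_pow' (Nat.lt_succ_of_le hF)]
    simp only [Finset.sum_range_succ, Finset.sum_range_zero, hF4, ← hb3, ← hc2, map_sub, map_add,
      map_mul, map_pow, map_ofNat]
    ring
  · simp
  · have hbc := (hb.mul hc).C_mul (2 : K)
    rw [map_ofNat] at hbc
    exact (hhom 1 3 rfl).sub hbc
  · exact (hhom 0 4 rfl).sub (hc.pow 2)

theorem exists_aeval_linePoint_eq_sq_add {σ : Type*} {N : ℕ} (h2 : (2 : K) ≠ 0)
    {g : MvPolynomial σ k} (hg : g.IsHomogeneous 4) {P : σ → K} {H : K} (hH : H ≠ 0)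
    (hPH : aeval P g = H ^ 2) {V : σ → MvPolynomial (Fin N) K} (hV : ∀ i, (V i).IsHomogeneous 1) :
    ∃ (Q : Polynomial (MvPolynomial (Fin N) K)) (A D : MvPolynomial (Fin N) K),
      aeval (linePoint (C ∘ P) V) g = Q ^ 2 + Polynomial.C A * Polynomial.X + Polynomial.C D ∧
      Q.coeff 2 = C H ∧ A.IsHomogeneous 3 ∧ D.IsHomogeneous 4 := by
  refine exists_eq_sq_add_of_natDegree_le_four h2 hH (natDegree_aeval_linePoint_le hg _ _) ?_
    (isHomogeneous_coeff_aeval_linePoint hg P hV)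
  rw [coeff_aeval_linePoint hg, ← hPH]
  exact aeval_algebraMap_apply _ P g

end CompletingTheSquare

section CoefficientDerivation

variable {k R : Type*} [CommRing k] [CommRing R] [Algebra k R]

/-- The extension of a derivation `d` of `R` to `R[X]` which kills `X`. -/
noncomputable def coeffDerivation (d : Derivation k R R) :
    Derivation k (Polynomial R) (Polynomial R) :=
  PolynomialModule.equivPolynomialSelf.toLinearMap.compDer d.mapCoeffs

@[simp]
theorem coeffDerivation_C (d : Derivation k R R) (r : R) :
    coeffDerivation d (Polynomial.C r) = Polynomial.C (d r) := by
  simp [coeffDerivation]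

@[simp]
theorem coeffDerivation_X (d : Derivation k R R) :
    coeffDerivation d (Polynomial.X : Polynomial R) = 0 := by
  simp [coeffDerivation]

theorem coeffDerivation_linePoint {σ : Type*} (d : Derivation k R R) (P V : σ → R) (i : σ) :
    coeffDerivation d (linePoint P V i) = linePoint (d ∘ P) (d ∘ V) i := by
  simp [linePoint, mul_comm Polynomial.X]

end CoefficientDerivation

section Rigidity

open Matrix

/-- Cramer's rule: the expansion of `x` in the basis dual to `a`, `b`, `c`. -/
theorem tripleProduct_smul_eq {R : Type*} [CommRing R] (a b c x : Fin 3 → R) :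
    (a ⬝ᵥ b ⨯₃ c) • x = (x ⬝ᵥ a) • b ⨯₃ c + (x ⬝ᵥ b) • c ⨯₃ a + (x ⬝ᵥ c) • a ⨯₃ b := by
  funext j
  fin_cases j <;> simp only [cross_apply, vec3_dotProduct, Fin.zero_eta, Fin.mk_one,
    Fin.reduceFinMk, Pi.add_apply, Pi.smul_apply, smul_eq_mul, cons_val_zero, cons_val_one,
    cons_val] <;> ring

theorem exists_eq_mul_isCoprime {R : Type*} [EuclideanDomain R] {a : R} (ha : a ≠ 0) (b : R) :
    ∃ e a' b', a = e * a' ∧ b = e * b' ∧ IsCoprime a' b' := by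
  classical
  let := EuclideanDomain.gcdMonoid R
  have he : gcd b a ≠ 0 := gcd_ne_zero_of_right ha
  exact ⟨gcd b a, a / gcd b a, b / gcd b a,
    (EuclideanDomain.mul_div_cancel' he (gcd_dvd_right b a)).symm,
    (EuclideanDomain.mul_div_cancel' he (gcd_dvd_left b a)).symm,
    (isCoprime_div_gcd_div_gcd ha).symm⟩

theorem exists_isRoot_of_natDegree_lt {N : Type*} [Field N] [IsAlgClosed N] {q w : Polynomial N}
    (hw : w ≠ 0) (hqw : w.natDegree < q.natDegree) :
    ∃ m, q.IsRoot m ∧ ∀ f, q ∣ w * f → f.IsRoot m := by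
  obtain ⟨e, w', q', rfl, rfl, hcop⟩ := exists_eq_mul_isCoprime hw q
  have hq0 : e * q' ≠ 0 := fun h ↦ by simp [h] at hqw
  rw [Polynomial.natDegree_mul (left_ne_zero_of_mul hw) (right_ne_zero_of_mul hw),
    Polynomial.natDegree_mul (left_ne_zero_of_mul hw) (right_ne_zero_of_mul hq0)] at hqw
  have hq' : 0 < q'.natDegree := by lia
  obtain ⟨m, hm⟩ := IsAlgClosed.exists_root q' (Polynomial.natDegree_pos_iff_degree_pos.mp hq').ne'
  refine ⟨m, Polynomial.root_mul_left_of_isRoot e hm, fun f hf ↦ hm.dvd ?_⟩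
  rw [mul_assoc] at hf
  exact hcop.symm.dvd_of_dvd_mul_left (mul_dvd_mul_iff_left (left_ne_zero_of_mul hw) |>.mp hf)

variable {k N : Type*} [Field k] [Field N] [Algebra k N]

theorem dvd_dotProduct_of_aeval_linePoint_eq_sq {g : MvPolynomial (Fin 3) k} {n : ℕ}
    (hg : g.IsHomogeneous n) {p v : Fin 3 → N} {q : Polynomial N}
    (hq : aeval (linePoint p v) g = q ^ 2) :
    q ∣ (fun i ↦ aeval (linePoint p v) (pderiv i g)) ⬝ᵥ (Polynomial.C ∘ p) ∧
      q ∣ (fun i ↦ aeval (linePoint p v) (pderiv i g)) ⬝ᵥ (Polynomial.C ∘ v) := by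
  set G := fun i ↦ aeval (linePoint p v) (pderiv i g)
  have hp : q ∣ G ⬝ᵥ (Polynomial.C ∘ p) := by
    have h := derivation_aeval (Polynomial.derivative'.restrictScalars k) (linePoint p v) g
    refine ⟨2 * Polynomial.derivative q, ?_⟩
    rw [hq] at h
    simp only [linePoint, Derivation.restrictScalars_apply,
      Polynomial.derivative'_apply, Polynomial.derivative_sq, Polynomial.derivative_add,
      Polynomial.derivative_mul, Polynomial.derivative_C, Polynomial.derivative_X, zero_mul,
      zero_add, mul_one, add_zero, smul_eq_mul] at h
    simp only [dotProduct, G, Function.comp_apply, ← h]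
    rw [map_ofNat]
    ring
  refine ⟨hp, ?_⟩
  have h := sum_mul_aeval_pderiv_of_isHomogeneous hg (linePoint p v)
  have h' : G ⬝ᵥ (Polynomial.C ∘ v) =
      (n : Polynomial N) * q ^ 2 - Polynomial.X * (G ⬝ᵥ (Polynomial.C ∘ p)) := by
    rw [← hq, ← h]
    simp only [linePoint, vec3_dotProduct, Fin.sum_univ_three, Function.comp_apply, G]
    ring
  rw [h']
  exact (dvd_mul_of_dvd_right (dvd_pow_self q two_ne_zero) _).sub (hp.mul_left _)

/-- At a common zero of `q` and all `∂g/∂xᵢ` on the line, the curve `g = 0` would be singular. -/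
theorem cross_dotProduct_eq_zero_of_dvd [IsAlgClosed N] {g : MvPolynomial (Fin 3) k} {n : ℕ}
    (hg : g.IsHomogeneous n) (hgN : HasNoSingularZero g N) {p v p' v' : Fin 3 → N}
    (hpv : p ⨯₃ v ≠ 0) {q : Polynomial N} (hq : aeval (linePoint p v) g = q ^ 2)
    (hdeg : 1 < q.natDegree)
    (hdvd : q ∣ (fun i ↦ aeval (linePoint p v) (pderiv i g)) ⬝ᵥ linePoint p' v') :
    p' ⬝ᵥ p ⨯₃ v = 0 ∧ v' ⬝ᵥ p ⨯₃ v = 0 := by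
  obtain ⟨hp, hv⟩ := dvd_dotProduct_of_aeval_linePoint_eq_sq hg hq
  set w := Polynomial.C (p' ⬝ᵥ p ⨯₃ v) * Polynomial.X + Polynomial.C (v' ⬝ᵥ p ⨯₃ v) with hw
  have hw' : linePoint p' v' ⬝ᵥ (Polynomial.C ∘ p) ⨯₃ (Polynomial.C ∘ v) = w := by
    simp only [linePoint, cross_apply, vec3_dotProduct, Function.comp_apply, cons_val_zero,
      cons_val_one, cons_val, map_add, map_sub, map_mul, hw]
    ring
  suffices hw0 : w = 0 by
    have h1 := congrArg (Polynomial.coeff · 1) hw0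
    have h0 := congrArg (Polynomial.coeff · 0) hw0
    exact ⟨by simpa [hw, Polynomial.coeff_C] using h1, by simpa [hw] using h0⟩
  by_contra hw0
  obtain ⟨m, hm, hmw⟩ := exists_isRoot_of_natDegree_lt hw0
    (Polynomial.natDegree_linear_le.trans_lt hdeg)
  have hsing : m • p + v = 0 := by
    refine hgN _ ?_ fun j ↦ ?_
    · rw [← eval_aeval_linePoint, hq, Polynomial.eval_pow, hm, zero_pow two_ne_zero]
    · rw [← eval_aeval_linePoint]
      refine hmw _ ?_
      have hcramer := congrFun (tripleProduct_smul_eq (linePoint p' v') (Polynomial.C ∘ p)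
        (Polynomial.C ∘ v) fun i ↦ aeval (linePoint p v) (pderiv i g)) j
      rw [hw'] at hcramer
      simp only [Pi.add_apply, Pi.smul_apply, smul_eq_mul] at hcramer
      rw [hcramer]
      exact ((hdvd.mul_right _).add (hp.mul_right _)).add (hv.mul_right _)
  apply hpv
  rw [eq_neg_of_add_eq_zero_right hsing, map_neg, map_smul, cross_self, smul_zero, neg_zero]

/-- Differentiating `g(P * m + V) = Q ^ 2 + A * m + D` along `d` and specialising along `ψ`. -/
theorem cross_dotProduct_derivation_eq_zero [IsAlgClosed N] {g : MvPolynomial (Fin 3) k} {n : ℕ}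
    (hg : g.IsHomogeneous n) (hgN : HasNoSingularZero g N) {R : Type*} [CommRing R] [Algebra k R]
    (ψ : R →ₐ[k] N) (d : Derivation k R R) {P V : Fin 3 → R} {Q : Polynomial R} {A D e : R}
    (h : aeval (linePoint P V) g = Q ^ 2 + Polynomial.C A * Polynomial.X + Polynomial.C D)
    (hA : e ∣ A) (hD : e ∣ D) (he : ψ e = 0) (hde : ψ (d e) = 0)
    (hdeg : 1 < (Q.map (ψ : R →+* N)).natDegree) (hPV : (ψ ∘ P) ⨯₃ (ψ ∘ V) ≠ 0) :
    (ψ ∘ d ∘ P) ⬝ᵥ (ψ ∘ P) ⨯₃ (ψ ∘ V) = 0 ∧ (ψ ∘ d ∘ V) ⬝ᵥ (ψ ∘ P) ⨯₃ (ψ ∘ V) = 0 := by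
  have hψ {B : R} (hB : e ∣ B) : ψ B = 0 ∧ ψ (d B) = 0 := by
    obtain ⟨B, rfl⟩ := hB
    simp [he, hde]
  refine cross_dotProduct_eq_zero_of_dvd hg hgN hPV (q := Q.map (ψ : R →+* N)) ?_ hdeg
    ⟨2 * (coeffDerivation d Q).map (ψ : R →+* N), ?_⟩
  · rw [← map_aeval_linePoint, h]
    simp [hψ hA, hψ hD]
  · have hd := derivation_aeval (coeffDerivation d) (linePoint P V) g
    rw [h] at hd
    have hdψ := congrArg (Polynomial.mapAlgHom ψ) hd
    simp only [coeffDerivation_linePoint, map_sum, smul_eq_mul, map_mul, map_add, map_zero,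
      Polynomial.coe_mapAlgHom, map_aeval_linePoint, map_linePoint, Derivation.leibniz_pow,
      Derivation.leibniz, coeffDerivation_C, coeffDerivation_X, Polynomial.map_C, RingHom.coe_coe,
      hψ hA, hψ hD] at hdψ
    rw [dotProduct, ← hdψ]
    simp only [Nat.add_one_sub_one, pow_one, nsmul_eq_mul, Nat.cast_ofNat, Polynomial.map_mul,
      Polynomial.map_ofNat]
    ring

end Rigidity

section CommonFactor

open Matrix

theorem ne_zero_and_natDegree_le_one_of_unique_simple_root {K : Type*} [Field K] (N : Type*)
    [Field N] [IsAlgClosed N] [Algebra K N] {e : Polynomial K}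
    (hsimple : ∀ ρ : N, Polynomial.aeval ρ e = 0 → Polynomial.aeval ρ (Polynomial.derivative e) ≠ 0)
    (hunique : ∀ ρ σ : N, Polynomial.aeval ρ e = 0 → Polynomial.aeval σ e = 0 → ρ = σ) :
    e ≠ 0 ∧ e.natDegree ≤ 1 := by
  have hsep : e.Separable := (Polynomial.isCoprime_iff_aeval_ne_zero_of_isAlgClosed K N _ _).mpr
    fun ρ ↦ or_iff_not_imp_left.mpr fun hρ ↦ hsimple ρ (not_not.mp hρ)
  refine ⟨hsep.ne_zero, ?_⟩
  rw [← Polynomial.card_rootSet_eq_natDegree hsep (IsAlgClosed.splits (e.map (algebraMap K N))),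
    Fintype.card_le_one_iff]
  exact fun ρ σ ↦ Subtype.ext (hunique ρ σ (Polynomial.aeval_eq_zero_of_mem_rootSet ρ.2)
    (Polynomial.aeval_eq_zero_of_mem_rootSet σ.2))

theorem map_dotProduct_cross {R S : Type*} [CommRing R] [CommRing S] (φ : R →+* S)
    (x y z : Fin 3 → R) : φ (x ⬝ᵥ y ⨯₃ z) = (φ ∘ x) ⬝ᵥ (φ ∘ y) ⨯₃ (φ ∘ z) := by
  simp only [cross_apply, vec3_dotProduct, Function.comp_apply, cons_val_zero, cons_val_one,
    cons_val, map_add, map_sub, map_mul]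

theorem dotProduct_cross_linePoint {R : Type*} [CommRing R] (x y a b : Fin 3 → R) :
    (Polynomial.C ∘ x) ⬝ᵥ (Polynomial.C ∘ y) ⨯₃ linePoint a b =
      Polynomial.C (x ⬝ᵥ y ⨯₃ a) * Polynomial.X + Polynomial.C (x ⬝ᵥ y ⨯₃ b) := by
  simp only [linePoint, cross_apply, vec3_dotProduct, Function.comp_apply, cons_val_zero,
    cons_val_one, cons_val, map_add, map_sub, map_mul]
  ring

variable {k K N : Type*} [Field k] [Field K] [Field N] [IsAlgClosed N] [Algebra k K] [Algebra k N]
  [Algebra K N] [IsScalarTower k K N] {g : MvPolynomial (Fin 3) k} {n : ℕ} {P a b : Fin 3 → K}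
  {Q : Polynomial (Polynomial K)} {A D e : Polynomial K} {H : K}

theorem dotProduct_cross_eq_zero_of_aeval_eq_zero (hg : g.IsHomogeneous n)
    (hgN : HasNoSingularZero g N) (hPab : a ⬝ᵥ P ⨯₃ b ≠ 0)
    (h : aeval (linePoint (Polynomial.C ∘ P) (linePoint a b)) g =
      Q ^ 2 + Polynomial.C A * Polynomial.X + Polynomial.C D)
    (hH : H ≠ 0) (hQ : Q.coeff 2 = Polynomial.C H) (hA : e ∣ A) (hD : e ∣ D)
    (d : Derivation k (Polynomial K) (Polynomial K)) {ρ : N} (hρ : Polynomial.aeval ρ e = 0)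
    (hdρ : Polynomial.aeval ρ (d e) = 0) :
    Polynomial.aeval ρ ((d ∘ Polynomial.C ∘ P) ⬝ᵥ (Polynomial.C ∘ P) ⨯₃ linePoint a b) = 0 ∧
    Polynomial.aeval ρ ((d ∘ linePoint a b) ⬝ᵥ (Polynomial.C ∘ P) ⨯₃ linePoint a b) = 0 := by
  set ψ : Polynomial K →ₐ[k] N := (Polynomial.aeval ρ).restrictScalars k
  have hψ (x : Fin 3 → Polynomial K) :
      Polynomial.aeval ρ (x ⬝ᵥ (Polynomial.C ∘ P) ⨯₃ linePoint a b) =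
        (ψ ∘ x) ⬝ᵥ (ψ ∘ Polynomial.C ∘ P) ⨯₃ (ψ ∘ linePoint a b) :=
    map_dotProduct_cross (ψ : Polynomial K →+* N) _ _ _
  rw [hψ, hψ]
  refine cross_dotProduct_derivation_eq_zero hg hgN ψ d h hA hD hρ hdρ ?_ fun hzero ↦ ?_
  · refine lt_of_lt_of_le one_lt_two (Polynomial.le_natDegree_of_ne_zero ?_)
    simpa [hQ, ψ] using hH
  · have ha := hψ (Polynomial.C ∘ a)
    rw [dotProduct_cross_linePoint, dot_cross_self, hzero, dotProduct_zero] at ha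
    simp [hPab] at ha

theorem aeval_derivative_ne_zero_of_aeval_eq_zero (hg : g.IsHomogeneous n)
    (hgN : HasNoSingularZero g N) (hPab : a ⬝ᵥ P ⨯₃ b ≠ 0)
    (h : aeval (linePoint (Polynomial.C ∘ P) (linePoint a b)) g =
      Q ^ 2 + Polynomial.C A * Polynomial.X + Polynomial.C D)
    (hH : H ≠ 0) (hQ : Q.coeff 2 = Polynomial.C H) (hA : e ∣ A) (hD : e ∣ D) {ρ : N}
    (hρ : Polynomial.aeval ρ e = 0) : Polynomial.aeval ρ (Polynomial.derivative e) ≠ 0 := by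
  intro hρ'
  have key := (dotProduct_cross_eq_zero_of_aeval_eq_zero hg hgN hPab h hH hQ hA hD
    (Polynomial.derivative'.restrictScalars k) hρ hρ').2
  have hderiv : Polynomial.derivative'.restrictScalars k ∘ linePoint a b = Polynomial.C ∘ a := by
    funext i
    simp [linePoint]
  rw [hderiv, dotProduct_cross_linePoint, dot_cross_self] at key
  simp [hPab] at key

/-- Differentiation along `e' * δ - (δ e) * ∂`, which kills `e`, where `δ` acts on coefficients. -/
theorem aeval_dotProduct_cross_eq_zero (hg : g.IsHomogeneous n)
    (hgN : HasNoSingularZero g N) (hPab : a ⬝ᵥ P ⨯₃ b ≠ 0)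
    (h : aeval (linePoint (Polynomial.C ∘ P) (linePoint a b)) g =
      Q ^ 2 + Polynomial.C A * Polynomial.X + Polynomial.C D)
    (hH : H ≠ 0) (hQ : Q.coeff 2 = Polynomial.C H) (hA : e ∣ A) (hD : e ∣ D)
    (δ : Derivation k K K) {ρ : N} (hρ : Polynomial.aeval ρ e = 0) :
    ρ * algebraMap K N ((δ ∘ P) ⬝ᵥ P ⨯₃ a) + algebraMap K N ((δ ∘ P) ⬝ᵥ P ⨯₃ b) = 0 := by
  have hρ' := aeval_derivative_ne_zero_of_aeval_eq_zero hg hgN hPab h hH hQ hA hD hρ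
  set d : Derivation k (Polynomial K) (Polynomial K) :=
    Polynomial.derivative e • coeffDerivation δ -
      coeffDerivation δ e • Polynomial.derivative'.restrictScalars k
  have hde : d e = 0 := by
    simp only [d, Derivation.sub_apply, Derivation.smul_apply, Derivation.restrictScalars_apply,
      Polynomial.derivative'_apply, smul_eq_mul]
    ring
  have key := (dotProduct_cross_eq_zero_of_aeval_eq_zero hg hgN hPab h hH hQ hA hD d hρ
    (by rw [hde, map_zero])).1
  have hdP : d ∘ Polynomial.C ∘ P = Polynomial.derivative e • (Polynomial.C ∘ δ ∘ P) := by
    funext i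
    simp [d]
  rw [hdP, smul_dotProduct, dotProduct_cross_linePoint, smul_eq_mul, map_mul] at key
  rw [mul_comm ρ]
  simpa using (mul_eq_zero.mp key).resolve_left hρ'

theorem natDegree_le_one_of_dvd (hg : g.IsHomogeneous n) (hgN : HasNoSingularZero g N)
    (hPab : a ⬝ᵥ P ⨯₃ b ≠ 0)
    (h : aeval (linePoint (Polynomial.C ∘ P) (linePoint a b)) g =
      Q ^ 2 + Polynomial.C A * Polynomial.X + Polynomial.C D)
    (hH : H ≠ 0) (hQ : Q.coeff 2 = Polynomial.C H) (hA : e ∣ A) (hD : e ∣ D)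
    (δ : Derivation k K K) (hδ : (δ ∘ P) ⨯₃ P ≠ 0) : e ≠ 0 ∧ e.natDegree ≤ 1 := by
  refine ne_zero_and_natDegree_le_one_of_unique_simple_root N
    (fun ρ ↦ aeval_derivative_ne_zero_of_aeval_eq_zero hg hgN hPab h hH hQ hA hD)
    fun ρ σ hρ hσ ↦ ?_
  have hρ' := aeval_dotProduct_cross_eq_zero hg hgN hPab h hH hQ hA hD δ hρ
  have hσ' := aeval_dotProduct_cross_eq_zero hg hgN hPab h hH hQ hA hD δ hσ
  by_contra hne
  have ha : (δ ∘ P) ⬝ᵥ P ⨯₃ a = 0 := by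
    rw [← map_eq_zero (algebraMap K N)]
    refine (mul_eq_zero.mp ?_).resolve_left (sub_ne_zero.mpr hne)
    linear_combination hρ' - hσ'
  have hb : (δ ∘ P) ⬝ᵥ P ⨯₃ b = 0 := by
    simpa [ha] using hρ'
  refine hδ ((smul_eq_zero.mp ((tripleProduct_smul_eq a P b _).trans ?_)).resolve_left hPab)
  have hdot (x : Fin 3 → K) : ((δ ∘ P) ⨯₃ P) ⬝ᵥ x = (δ ∘ P) ⬝ᵥ P ⨯₃ x := by
    rw [dotProduct_comm, triple_product_permutation]
  simp [hdot, ha, hb]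

end CommonFactor

section Specialization

variable {k K : Type*} [Field k] [Field K] [Algebra k K]

theorem aeval_linePoint_eq_of_generic_direction {g : MvPolynomial (Fin 3) k} {P : Fin 3 → K}
    {Q : Polynomial (MvPolynomial (Fin 2) K)} {A D : MvPolynomial (Fin 2) K}
    (h : aeval (linePoint (C ∘ P) ![X 0, X 1, 0]) g =
      Q ^ 2 + Polynomial.C A * Polynomial.X + Polynomial.C D)
    (φ : MvPolynomial (Fin 2) K →ₐ[K] Polynomial K) :
    aeval (linePoint (Polynomial.C ∘ P) ![φ (X 0), φ (X 1), 0]) g =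
      Q.map (φ : _ →+* Polynomial K) ^ 2 + Polynomial.C (φ A) * Polynomial.X +
        Polynomial.C (φ D) := by
  have hP : φ.restrictScalars k ∘ C ∘ P = Polynomial.C ∘ P :=
    funext fun i ↦ φ.commutes (P i)
  have hV : φ.restrictScalars k ∘ ![X 0, X 1, 0] = ![φ (X 0), φ (X 1), 0] := by
    funext i
    fin_cases i <;> simp
  have hφ := map_aeval_linePoint (φ.restrictScalars k) (C ∘ P) ![X 0, X 1, 0] g
  rw [h, hP, hV] at hφ
  rw [← hφ]
  simp only [Polynomial.map_add, Polynomial.map_mul, Polynomial.map_pow, Polynomial.map_C,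
    Polynomial.map_X]
  rfl

variable [Infinite K]

theorem eq_zero_of_forall_aeval_one_eq_zero {F : MvPolynomial (Fin 2) K} {n : ℕ}
    (hF : F.IsHomogeneous n) (h : ∀ κ : K, aeval ![1, κ] F = 0) : F = 0 := by
  refine (mul_eq_zero.mp (MvPolynomial.funext (p := X 0 * F) (q := 0) fun x ↦ ?_)).resolve_left
    (X_ne_zero 0)
  rw [map_mul, eval_X, map_zero]
  by_cases hx : x 0 = 0
  · rw [hx, zero_mul]
  · have hscale : x = x 0 • ![1, x 1 / x 0] := by
      funext i
      fin_cases i <;> simp [mul_div_cancel₀, hx]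
    rw [← aeval_eq_eval, hscale, aeval_smul_of_isHomogeneous hF, h, mul_zero, mul_zero]

theorem exists_specialization_eq_mul_isCoprime {A D : MvPolynomial (Fin 2) K} {m n : ℕ}
    (hA : A.IsHomogeneous m) (hD : D.IsHomogeneous n) (hn : 1 < n)
    (hgcd : ∀ (κ : K) (e : Polynomial K), e ∣ aeval (linePoint ![1, κ] ![0, 1]) A →
      e ∣ aeval (linePoint ![1, κ] ![0, 1]) D → e ≠ 0 ∧ e.natDegree ≤ 1) :
    ∃ (κ : K) (e α β : Polynomial K), aeval (linePoint ![1, κ] ![0, 1]) A = e * α ∧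
      aeval (linePoint ![1, κ] ![0, 1]) D = e * β ∧ IsCoprime α β ∧ m ≤ α.natDegree + 1 := by
  have hA0 : A ≠ 0 := by
    rintro rfl
    have hgcd' (κ : K) := hgcd κ _ (by rw [map_zero]; exact dvd_zero _) dvd_rfl
    refine (hgcd' 0).1 ?_
    rw [eq_zero_of_forall_aeval_one_eq_zero hD fun κ ↦ ?_, map_zero]
    rw [← coeff_aeval_linePoint hD _ ![0, 1]]
    exact Polynomial.coeff_eq_zero_of_natDegree_lt ((hgcd' κ).2.trans_lt hn)
  obtain ⟨κ, hκ⟩ := not_forall.mp (mt (eq_zero_of_forall_aeval_one_eq_zero hA) hA0)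
  rw [← coeff_aeval_linePoint hA _ ![0, 1]] at hκ
  have hAκ : aeval (linePoint ![1, κ] ![0, 1]) A ≠ 0 :=
    fun h ↦ hκ (by rw [h, Polynomial.coeff_zero])
  obtain ⟨e, α, β, hα, hβ, hcop⟩ :=
    exists_eq_mul_isCoprime hAκ (aeval (linePoint ![1, κ] ![0, 1]) D)
  refine ⟨κ, e, α, β, hα, hβ, hcop, ?_⟩
  have he := hgcd κ e (Dvd.intro _ hα.symm) (Dvd.intro _ hβ.symm)
  have hm := Polynomial.le_natDegree_of_ne_zero hκ
  rw [hα] at hAκ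
  rw [hα, Polynomial.natDegree_mul he.1 (right_ne_zero_of_mul hAκ)] at hm
  lia

open Matrix in
theorem exists_aeval_linePoint_eq_sq_add_isCoprime (h2 : (2 : k) ≠ 0) {g : MvPolynomial (Fin 3) k}
    (hg : g.IsHomogeneous 4) (hgk : HasNoSingularZero g (AlgebraicClosure k)) {P : Fin 3 → K}
    {H : K} (hH : H ≠ 0) (hPH : aeval P g = H ^ 2) (hP2 : P 2 ≠ 0) (δ : Derivation k K K)
    (hδ : (δ ∘ P) ⨯₃ P ≠ 0) :
    ∃ (κ : K) (e α β : Polynomial K) (Q : Polynomial (Polynomial K)),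
      aeval (linePoint (Polynomial.C ∘ P) (linePoint ![1, κ, 0] ![0, 1, 0])) g =
        Q ^ 2 + Polynomial.C (e * α) * Polynomial.X + Polynomial.C (e * β) ∧
      IsCoprime α β ∧ 1 < α.natDegree := by
  have hV (i : Fin 3) : (![X 0, X 1, 0] i : MvPolynomial (Fin 2) K).IsHomogeneous 1 := by
    fin_cases i
    exacts [isHomogeneous_X K 0, isHomogeneous_X K 1, isHomogeneous_zero _ _ 1]
  have h2K : (2 : K) ≠ 0 := by
    rw [← map_ofNat (algebraMap k K)]
    exact (map_ne_zero _).mpr h2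
  obtain ⟨Q, A, D, hQ, hQ2, hA, hD⟩ := exists_aeval_linePoint_eq_sq_add h2K hg hH hPH hV
  set φ : K → MvPolynomial (Fin 2) K →ₐ[K] Polynomial K := fun κ ↦
    aeval (linePoint ![1, κ] ![0, 1])
  have hφ (κ : K) : aeval (linePoint (Polynomial.C ∘ P) (linePoint ![1, κ, 0] ![0, 1, 0])) g =
      Q.map (φ κ : _ →+* Polynomial K) ^ 2 + Polynomial.C (φ κ A) * Polynomial.X +
        Polynomial.C (φ κ D) := by
    rw [← aeval_linePoint_eq_of_generic_direction hQ]
    congr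
    funext i
    fin_cases i <;> simp [φ, linePoint]
  have hgcd (κ : K) (e : Polynomial K) (heA : e ∣ φ κ A) (heD : e ∣ φ κ D) :
      e ≠ 0 ∧ e.natDegree ≤ 1 := by
    refine natDegree_le_one_of_dvd hg (hgk.of_algebraicClosure (AlgebraicClosure K)) ?_ (hφ κ) hH
      ?_ heA heD δ hδ
    · simpa [cross_apply] using hP2
    · rw [Polynomial.coeff_map, hQ2]
      exact (φ κ).commutes H
  obtain ⟨κ, e, α, β, hα, hβ, hcop, hdeg⟩ :=
    exists_specialization_eq_mul_isCoprime hA hD (by norm_num) hgcd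
  exact ⟨κ, e, α, β, _, hα ▸ hβ ▸ hφ κ, hcop, by lia⟩

end Specialization

section Contact

/-- The Taylor expansion of `f (β • P - α • V)` modulo `α ^ 2`, divided by a power of `β`. -/
theorem sq_dvd_of_aeval_eq_zero {σ k R : Type*} [Fintype σ] [CommRing k] [CommRing R] [Algebra k R]
    {α β : R} (hαβ : IsCoprime α β) {P V : σ → R} {f : MvPolynomial σ k} {n : ℕ}
    (hf : f.IsHomogeneous n) (h : aeval (β • P - α • V) f = 0) :
    α ^ 2 ∣ β * aeval P f - α * ∑ i, V i * aeval P (pderiv i f) := by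
  obtain ⟨s, γ, hγ⟩ := hαβ.pow_left (m := 2)
  set π : R →ₐ[k] R ⧸ Ideal.span {α ^ 2} := Ideal.Quotient.mkₐ k _
  have hπ {r : R} : π r = 0 ↔ α ^ 2 ∣ r := by
    rw [Ideal.Quotient.mkₐ_eq_mk, Ideal.Quotient.eq_zero_iff_mem, Ideal.mem_span_singleton]
  have hcomp (x : σ → R) (f : MvPolynomial σ k) : aeval (π ∘ x) f = π (aeval x f) :=
    (comp_aeval_apply x π f).symm
  have hpoint : π ∘ P + (fun i ↦ π (-(γ * α * V i))) = π γ • π ∘ (β • P - α • V) := by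
    funext i
    simp only [Pi.add_apply, Pi.sub_apply, Pi.smul_apply, Function.comp_apply, smul_eq_mul,
      ← map_add, ← map_mul]
    rw [← sub_eq_zero, ← map_sub, hπ]
    exact ⟨s * P i, by linear_combination -P i * hγ⟩
  have htaylor := aeval_add_of_mul_eq_zero (π ∘ P) (fun i ↦ π (-(γ * α * V i))) (fun i j ↦ by
    rw [← map_mul, hπ]
    exact ⟨γ ^ 2 * V i * V j, by ring⟩) f
  rw [hpoint, aeval_smul_of_isHomogeneous hf, hcomp, h, map_zero, mul_zero] at htaylor
  simp only [hcomp, ← map_mul, ← map_sum, ← map_add] at htaylor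
  obtain ⟨r, hr⟩ := hπ.mp htaylor.symm
  simp only [neg_mul, Finset.sum_neg_distrib, mul_assoc, ← Finset.mul_sum] at hr
  set w := ∑ i, V i * aeval P (pderiv i f)
  exact ⟨β * r - s * α * w, by linear_combination β * hr + α * w * hγ⟩

theorem aeval_eq_zero_and_sum_mul_pderiv_eq_zero {σ k K : Type*} [Fintype σ] [Field k] [Field K]
    [Algebra k K] {P : σ → K} {V : σ → Polynomial K} {α β : Polynomial K} (hαβ : IsCoprime α β)
    (hα : 1 < α.natDegree) (hV : ∀ i, (V i).natDegree ≤ 1) {f : MvPolynomial σ k} {n : ℕ}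
    (hf : f.IsHomogeneous n) (h : aeval (β • (Polynomial.C ∘ P) - α • V) f = 0) :
    aeval P f = 0 ∧ ∑ i, V i * Polynomial.C (aeval P (pderiv i f)) = 0 := by
  have hC (f : MvPolynomial σ k) : aeval (Polynomial.C ∘ P) f = Polynomial.C (aeval P f) :=
    aeval_algebraMap_apply _ P f
  have hdvd := sq_dvd_of_aeval_eq_zero hαβ hf h
  simp only [hC] at hdvd
  have ha : aeval P f = 0 := by
    have hα' : α ∣ β * Polynomial.C (aeval P f) :=
      (dvd_sub_left (dvd_mul_right α _)).mp ((dvd_pow_self α two_ne_zero).trans hdvd)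
    refine Polynomial.C_eq_zero.mp (Polynomial.eq_zero_of_dvd_of_natDegree_lt
      (hαβ.dvd_of_dvd_mul_left hα') ?_)
    rw [Polynomial.natDegree_C]
    exact zero_lt_one.trans hα
  have hα0 : α ≠ 0 := fun h ↦ by simp [h] at hα
  rw [ha, map_zero, mul_zero, zero_sub, dvd_neg, sq, mul_dvd_mul_iff_left hα0] at hdvd
  refine ⟨ha, Polynomial.eq_zero_of_dvd_of_natDegree_lt hdvd (lt_of_le_of_lt ?_ hα)⟩
  exact Polynomial.natDegree_sum_le_of_forall_le _ _ fun i _ ↦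
    (Polynomial.natDegree_mul_C_le _ _).trans (hV i)

end Contact

section FractionFieldDerivation

theorem derivation_eq_of_forall_algebraMap {k A K M : Type*} [Field k] [CommRing A] [IsDomain A]
    [Field K] [Algebra k K] [Algebra A K] [IsFractionRing A K] [AddCommGroup M] [Module k M]
    [Module K M] {d d' : Derivation k K M} (h : ∀ a, d (algebraMap A K a) = d' (algebraMap A K a)) :
    d = d' := by
  ext x
  obtain ⟨a, b, -, rfl⟩ := IsFractionRing.div_surjective (A := A) x
  rw [Derivation.leibniz_div, Derivation.leibniz_div, h, h]

theorem exists_derivation_forall_algebraMap_eq {k A K : Type*} [Field k] [CommRing A] [Algebra k A]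
    [Field K] [Algebra k K] [Algebra A K] [IsScalarTower k A K] [IsFractionRing A K]
    (d : Derivation k A A) :
    ∃ δ : Derivation k K K, ∀ a, δ (algebraMap A K a) = algebraMap A K (d a) := by
  set φ := KaehlerDifferential.map k k A K
  set ℓ := (Algebra.linearMap A K).comp d.liftKaehlerDifferential
  set ψ := IsLocalizedModule.lift (nonZeroDivisors A) φ ℓ
    (IsLocalizedModule.map_units (Algebra.linearMap A K))
  refine ⟨(ψ.extendScalarsOfIsLocalization (nonZeroDivisors A) K).compDer
    (KaehlerDifferential.D k K), fun a ↦ ?_⟩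
  have hψ := IsLocalizedModule.lift_apply (nonZeroDivisors A) φ ℓ
    (IsLocalizedModule.map_units (Algebra.linearMap A K)) (KaehlerDifferential.D k A a)
  simpa [φ, ℓ] using hψ

variable {k K : Type*} [Field k] [Field K] [Algebra k K] [Algebra (Polynomial k) K]
  [IsScalarTower k (Polynomial k) K] [IsFractionRing (Polynomial k) K]

theorem isSeparable_of_derivation_ne_zero {F : Type*} [Field F] [Algebra k F] [Algebra F K]
    [IsScalarTower k F K] (δ : Derivation k K K) {u : F} (hu : δ (algebraMap F K u) ≠ 0) :
    Algebra.IsSeparable F K := by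
  set T := algebraMap (Polynomial k) K Polynomial.X
  have hp (p : Polynomial k) : algebraMap (Polynomial k) K p = Polynomial.aeval T p := by
    rw [Polynomial.aeval_algebraMap_apply, Polynomial.aeval_X_left_apply]
  have hD (D : Derivation k K (Ω[K⁄F])) (hDu : D (algebraMap F K u) = 0) : D = 0 := by
    have hprop : δ T • D = (LinearMap.toSpanSingleton K _ (D T)).compDer δ :=
      derivation_eq_of_forall_algebraMap (A := Polynomial k) fun p ↦ by
        simp [hp, Derivation.map_aeval, smul_smul, mul_comm]
    have hDT : D T = 0 := by
      have := DFunLike.congr_fun hprop (algebraMap F K u)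
      simpa [hDu, hu] using this.symm
    exact derivation_eq_of_forall_algebraMap (A := Polynomial k) fun p ↦ by
      simp [hp, Derivation.map_aeval, hDT]
  have hDF := hD ((KaehlerDifferential.D F K).restrictScalars k)
    ((KaehlerDifferential.D F K).map_algebraMap u)
  have hΩ : Subsingleton (Ω[K⁄F]) := by
    rw [← Submodule.subsingleton_iff K, ← subsingleton_iff_bot_eq_top,
      ← KaehlerDifferential.span_range_derivation, eq_comm, Submodule.span_eq_bot]
    rintro _ ⟨x, rfl⟩
    exact DFunLike.congr_fun hDF x
  have : Algebra.FormallyUnramified F K := ⟨hΩ⟩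
  have : Algebra.EssFiniteType (Polynomial k) K := .of_isLocalization K (nonZeroDivisors _)
  have : Algebra.EssFiniteType k K := .comp k (Polynomial k) K
  have : Algebra.EssFiniteType F K := .of_comp k F K
  exact Algebra.FormallyUnramified.isSeparable F K

open IntermediateField in
theorem transcendental_of_derivation_ne_zero (δ : Derivation k K K) {u : K} (hu : δ u ≠ 0) :
    Transcendental k u := by
  intro halg
  have := isAlgebraic_adjoin_simple halg.isIntegral
  have : Algebra.IsSeparable k⟮u⟯ K :=
    isSeparable_of_derivation_ne_zero δ (u := AdjoinSimple.gen k u) (by simpa)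
  have : Algebra.IsAlgebraic k K := .trans k k⟮u⟯ K
  exact Polynomial.transcendental_X k <|
    (isAlgebraic_algebraMap_iff (IsFractionRing.injective (Polynomial k) K)).mp
      (Algebra.IsAlgebraic.isAlgebraic _)

end FractionFieldDerivation

section Independence

theorem aeval_derivative_ne_zero_of_irreducible {R F K : Type*} [CommRing R] [IsDomain R]
    [IsGCDMonoid R] [Field F] [Algebra R F] [IsFractionRing R F] [Field K] [Algebra F K]
    [Algebra R K] [IsScalarTower R F K] {f : Polynomial R} (hf : Irreducible f) {x : K}
    (hx : IsSeparable F x) (h : Polynomial.aeval x f = 0) :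
    Polynomial.aeval x (Polynomial.derivative f) ≠ 0 := by
  have hinj : Function.Injective (algebraMap R K) := by
    rw [IsScalarTower.algebraMap_eq R F K]
    exact (algebraMap F K).injective.comp (IsFractionRing.injective R F)
  have hdeg : f.natDegree ≠ 0 := by
    intro hdeg
    rw [Polynomial.eq_C_of_natDegree_eq_zero hdeg, Polynomial.aeval_C,
      map_eq_zero_iff _ hinj] at h
    exact hf.ne_zero (by rw [Polynomial.eq_C_of_natDegree_eq_zero hdeg, h, map_zero])
  have hirr := ((hf.isPrimitive hdeg).irreducible_iff_irreducible_map_fraction_map (K := F)).mp hf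
  rw [← Polynomial.aeval_map_algebraMap F] at h ⊢
  rw [← Polynomial.derivative_map]
  have hsep := hx.of_dvd ((minpoly.irreducible hx.isIntegral).dvd_symm hirr (minpoly.dvd F x h))
  exact hsep.aeval_derivative_ne_zero h

open IntermediateField in
theorem isFractionRing_adjoin_simple {k L : Type*} [Field k] [Field L] [Algebra k L] {u : L}
    (hu : Transcendental k u) :
    letI : Algebra (Polynomial k) k⟮u⟯ := (Polynomial.aeval (AdjoinSimple.gen k u)).toAlgebra
    IsFractionRing (Polynomial k) k⟮u⟯ := by
  let : Algebra (Polynomial k) k⟮u⟯ := (Polynomial.aeval (AdjoinSimple.gen k u)).toAlgebra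
  refine IsLocalization.isLocalization_of_algEquiv _ (AlgEquiv.ofRingEquiv
    (f := (RatFunc.algEquivOfTranscendental u hu : RatFunc k ≃+* k⟮u⟯)) fun p ↦ ?_)
  exact RatFunc.algEquivOfTranscendental_algebraMap u hu p

open IntermediateField in
theorem aeval_pderiv_ne_zero_of_irreducible {k K : Type*} [Field k] [Field K] [Algebra k K]
    {u v : K} (hu : Transcendental k u) (hv : IsSeparable k⟮u⟯ v) {f : MvPolynomial (Fin 2) k}
    (hf : Irreducible f) (h : aeval ![u, v] f = 0) : aeval ![u, v] (pderiv 1 f) ≠ 0 := by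
  let : Algebra (Polynomial k) k⟮u⟯ := (Polynomial.aeval (AdjoinSimple.gen k u)).toAlgebra
  let : Algebra (Polynomial k) K := (Polynomial.aeval u).toAlgebra
  have hFK (p : Polynomial k) : algebraMap (Polynomial k) K p =
      algebraMap k⟮u⟯ K (algebraMap (Polynomial k) k⟮u⟯ p) :=
    (Polynomial.aeval_algebraMap_apply K (AdjoinSimple.gen k u) p)
  have : IsScalarTower (Polynomial k) k⟮u⟯ K := .of_algebraMap_eq hFK
  have := isFractionRing_adjoin_simple hu
  have hX : algebraMap (Polynomial k) K Polynomial.X = u := Polynomial.aeval_X u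
  obtain ⟨f, rfl⟩ := (Polynomial.Bivariate.equivMvPolynomial k).surjective f
  have heval (f : Polynomial (Polynomial k)) :
      aeval ![u, v] (Polynomial.Bivariate.equivMvPolynomial k f) = Polynomial.aeval v f := by
    refine DFunLike.congr_fun (f := (aeval ![u, v]).comp
      (Polynomial.Bivariate.equivMvPolynomial k : _ →ₐ[k] MvPolynomial (Fin 2) k))
      (g := (Polynomial.aeval v).restrictScalars k)
      (Polynomial.algHom_ext' (Polynomial.algHom_ext ?_) ?_) f
    · simp [hX]
    · simp
  rw [Polynomial.Bivariate.pderiv_one_equivMvPolynomial, heval]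
  exact aeval_derivative_ne_zero_of_irreducible
    ((MulEquiv.irreducible_iff (Polynomial.Bivariate.equivMvPolynomial k)).mp hf) hv
    ((heval f).symm.trans h)

open IntermediateField in
theorem algebraicIndependent_of_forall_aeval_eq_zero {k K L : Type*} [Field k] [Field K] [Field L]
    [Algebra k K] [Algebra k L] {u v : K} (hu : Transcendental k u) (hv : IsSeparable k⟮u⟯ v)
    {x : Fin 2 → L}
    (h : ∀ f : MvPolynomial (Fin 2) k, aeval x f = 0 →
      aeval ![u, v] f = 0 ∧ aeval ![u, v] (pderiv 1 f) = 0) :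
    AlgebraicIndependent k x := by
  by_contra hx
  have hker : RingHom.ker (aeval x : MvPolynomial (Fin 2) k →ₐ[k] L) ≠ ⊥ :=
    mt (RingHom.injective_iff_ker_eq_bot (aeval x : MvPolynomial (Fin 2) k →ₐ[k] L)).mpr hx
  obtain ⟨f, hf, hprime⟩ := (RingHom.ker_isPrime _).exists_mem_prime_of_ne_bot hker
  exact aeval_pderiv_ne_zero_of_irreducible hu hv hprime.irreducible (h f hf).1 (h f hf).2

theorem pderiv_one_dehomogenize {k : Type*} [Field k] (f : MvPolynomial (Fin 3) k) :
    pderiv 1 (dehomogenize k f) = dehomogenize k (pderiv 1 f) := by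
  rw [dehomogenize, derivation_aeval, Fin.sum_univ_three]
  simp

open IntermediateField in
theorem isGenericPoint_of_forall_aeval_eq_zero {k K L : Type*} [Field k] [Field K] [Field L]
    [Algebra k K] [Algebra k L] {P : Fin 3 → K} (hP : P 2 ≠ 0)
    (hu : Transcendental k (P 0 / P 2)) (hv : IsSeparable k⟮P 0 / P 2⟯ (P 1 / P 2)) {Q : Fin 3 → L}
    (h : ∀ (n : ℕ) (f : MvPolynomial (Fin 3) k), f.IsHomogeneous n → aeval Q f = 0 →
      aeval P f = 0 ∧ aeval P (pderiv 1 f) = 0) : IsGenericPoint k Q := by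
  have hQ : Q 2 ≠ 0 := by
    intro hQ
    have := (h 1 (X 2) (isHomogeneous_X k 2) (by rwa [aeval_X])).1
    exact hP (by rwa [aeval_X] at this)
  rw [isGenericPoint_iff_algebraicIndependent hQ]
  refine algebraicIndependent_of_forall_aeval_eq_zero hu hv fun f hf ↦ ?_
  obtain ⟨n, F, hF, rfl⟩ := exists_isHomogeneous_dehomogenize_eq f
  obtain ⟨hF0, hF1⟩ := h n F hF (by rw [aeval_eq_pow_mul_aeval_dehomogenize hF Q hQ, hf, mul_zero])
  rw [aeval_eq_pow_mul_aeval_dehomogenize hF P hP] at hF0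
  rw [aeval_eq_pow_mul_aeval_dehomogenize hF.pderiv P hP] at hF1
  rw [pderiv_one_dehomogenize]
  exact ⟨(mul_eq_zero.mp hF0).resolve_left (pow_ne_zero _ hP),
    (mul_eq_zero.mp hF1).resolve_left (pow_ne_zero _ hP)⟩

end Independence

section ResidualPoint

theorem exists_sq_eq_aeval_of_aeval_linePoint_eq {σ k R L : Type*} [Field k] [CommRing R]
    [Algebra k R] [Field L] [Algebra k L] {g : MvPolynomial σ k} {n : ℕ} (hg : g.IsHomogeneous n)
    (hn : Even n)
    {P V : σ → R} {Q : Polynomial R} {e α β : R}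
    (h : aeval (linePoint P V) g =
      Q ^ 2 + Polynomial.C (e * α) * Polynomial.X + Polynomial.C (e * β))
    (φ : R →ₐ[k] L) (hα : φ α ≠ 0) : ∃ ω, ω ^ 2 = aeval (φ ∘ (β • P - α • V)) g := by
  set m := -φ β / φ α with hm
  have hpt : φ ∘ (β • P - α • V) = -φ α • (m • (φ ∘ P) + φ ∘ V) := by
    funext i
    simp only [hm, Function.comp_apply, Pi.sub_apply, Pi.smul_apply, Pi.add_apply, smul_eq_mul,
      map_sub, map_mul]
    field_simp
    ring
  obtain ⟨r, rfl⟩ := hn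
  refine ⟨φ α ^ r * (Q.map (φ : R →+* L)).eval m, ?_⟩
  rw [hpt, aeval_smul_of_isHomogeneous hg, (Even.add_self r).neg_pow, ← eval_aeval_linePoint,
    ← map_aeval_linePoint, h]
  simp only [Polynomial.map_add, Polynomial.map_mul, Polynomial.map_pow, Polynomial.map_C,
    Polynomial.map_X, Polynomial.eval_add, Polynomial.eval_mul, Polynomial.eval_pow,
    Polynomial.eval_C, Polynomial.eval_X, RingHom.coe_coe, map_mul, hm]
  field_simp
  ring

variable {k K L : Type*} [Field k] [Field K] [Field L] [Algebra k K] [Algebra k L] [Algebra K L]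
  [IsScalarTower k K L]

theorem aeval_eq_zero_and_pderiv_one_eq_zero {P : Fin 3 → K} {κ : K} {α β : Polynomial K}
    (hαβ : IsCoprime α β) (hα : 1 < α.natDegree) {f : MvPolynomial (Fin 3) k} {n : ℕ}
    (hf : f.IsHomogeneous n)
    (h : aeval (β • (Polynomial.C ∘ P) - α • linePoint ![1, κ, 0] ![0, 1, 0]) f = 0) :
    aeval P f = 0 ∧ aeval P (pderiv 1 f) = 0 := by
  obtain ⟨h0, h1⟩ := aeval_eq_zero_and_sum_mul_pderiv_eq_zero hαβ hα
    (V := linePoint ![1, κ, 0] ![0, 1, 0]) (fun i ↦ Polynomial.natDegree_linear_le) hf h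
  refine ⟨h0, ?_⟩
  simpa [Fin.sum_univ_three, linePoint, -map_aeval] using congrArg (Polynomial.eval 0) h1

variable [Algebra (Polynomial k) K] [IsScalarTower k (Polynomial k) K]
  [IsFractionRing (Polynomial k) K]

open Matrix in
theorem exists_isGenericPoint_of_derivation_ne_zero (h2 : (2 : k) ≠ 0) {g : MvPolynomial (Fin 3) k}
    (hg : g.IsHomogeneous 4) (hgk : HasNoSingularZero g (AlgebraicClosure k)) {P : Fin 3 → K}
    {H : K} (hH : H ≠ 0) (hPH : aeval P g = H ^ 2) (δ : Derivation k K K)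
    (hδ : δ (P 0 / P 2) ≠ 0) {τ : L} (hτ : Transcendental K τ) :
    ∃ (Q : Fin 3 → L) (ω : L), IsGenericPoint k Q ∧ ω ^ 2 = aeval Q g := by
  have : Infinite K := .of_injective _ (IsFractionRing.injective (Polynomial k) K)
  have hP2 : P 2 ≠ 0 := fun h ↦ hδ (by rw [h, div_zero, map_zero])
  have hcross : (δ ∘ P) ⨯₃ P ≠ 0 := by
    intro h
    have h1 := congrFun h 1
    simp only [cross_apply, Function.comp_apply, cons_val_one, cons_val_zero, Pi.zero_apply] at h1
    refine hδ ?_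
    rw [Derivation.leibniz_div, smul_eq_mul, smul_eq_mul, smul_eq_mul]
    linear_combination -(P 2)⁻¹ ^ 2 * h1
  obtain ⟨κ, e, α, β, Q, hQ, hαβ, hα⟩ :=
    exists_aeval_linePoint_eq_sq_add_isCoprime h2 hg hgk hH hPH hP2 δ hcross
  have hinj : Function.Injective (Polynomial.aeval (R := K) τ) := transcendental_iff_injective.mp hτ
  set φ := (Polynomial.aeval (R := K) τ).restrictScalars k
  have hφα : φ α ≠ 0 := (map_ne_zero_iff φ hinj).mpr fun h ↦ by simp [h] at hα
  obtain ⟨ω, hω⟩ := exists_sq_eq_aeval_of_aeval_linePoint_eq hg (by decide) hQ φ hφα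
  refine ⟨_, ω, isGenericPoint_of_forall_aeval_eq_zero hP2
    (transcendental_of_derivation_ne_zero δ hδ) ?_ fun n f hf h ↦ ?_, hω⟩
  · have := isSeparable_of_derivation_ne_zero δ
      (u := IntermediateField.AdjoinSimple.gen k (P 0 / P 2)) (by simpa)
    exact Algebra.IsSeparable.isSeparable _ _
  · replace h := (map_eq_zero_iff φ hinj).mp ((comp_aeval_apply _ φ f).trans h)
    exact aeval_eq_zero_and_pderiv_one_eq_zero hαβ hα hf h

end ResidualPoint

section Wronskian

open IntermediateField algebraAdjoinAdjoin in
theorem transcendental_adjoin_simple_of_algebraicIndependent {k L : Type*} [Field k] [Field L]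
    [Algebra k L] {x : Fin 2 → L} (hx : AlgebraicIndependent k x) :
    Transcendental k⟮x 0⟯ (x 1) := by
  have h := hx.transcendental_adjoin (s := {0}) (i := 1) (by simp)
  rw [Set.image_singleton] at h
  exact mt (IsFractionRing.isAlgebraic_iff (Algebra.adjoin k {x 0}) k⟮x 0⟯ L).mpr h

variable {k L : Type*} [Field k] [Field L] [Algebra k L] {P : Fin 3 → Polynomial k}
  {H : Polynomial k} {x : Fin 2 → L}

open IntermediateField in
theorem exists_isGenericPoint_of_wronskian_zero_two_ne_zero (h2 : (2 : k) ≠ 0)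
    {g : MvPolynomial (Fin 3) k} (hg : g.IsHomogeneous 4)
    (hgk : HasNoSingularZero g (AlgebraicClosure k)) (hH : H ≠ 0) (hPH : aeval P g = H ^ 2)
    (hW : Polynomial.wronskian (P 0) (P 2) ≠ 0) (hx : AlgebraicIndependent k x) :
    ∃ (Q : Fin 3 → L) (ω : L), IsGenericPoint k Q ∧ ω ^ 2 = aeval Q g := by
  let : Algebra (Polynomial k) k⟮x 0⟯ := (Polynomial.aeval (AdjoinSimple.gen k (x 0))).toAlgebra
  have := isFractionRing_adjoin_simple (hx.transcendental 0)
  have : IsScalarTower k (Polynomial k) k⟮x 0⟯ :=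
    .of_algebraMap_eq fun c ↦ (Polynomial.aeval_C (AdjoinSimple.gen k (x 0)) c).symm
  set ι := algebraMap (Polynomial k) k⟮x 0⟯
  have hι {p : Polynomial k} (hp : p ≠ 0) : ι p ≠ 0 :=
    (map_ne_zero_iff ι (IsFractionRing.injective (Polynomial k) k⟮x 0⟯)).mpr hp
  obtain ⟨δ, hδ⟩ := exists_derivation_forall_algebraMap_eq (K := k⟮x 0⟯)
    (Polynomial.derivative' (R := k))
  have hP2 : P 2 ≠ 0 := fun h ↦ hW (by rw [h, Polynomial.wronskian_zero_right])
  refine exists_isGenericPoint_of_derivation_ne_zero h2 hg hgk (P := ι ∘ P) (hι hH) ?_ δ ?_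
    (transcendental_adjoin_simple_of_algebraicIndependent hx)
  · rw [← map_pow, ← hPH]
    exact aeval_algebraMap_apply _ P g
  · rw [Function.comp_apply, Function.comp_apply, Derivation.leibniz_div, hδ, hδ]
    refine smul_ne_zero (pow_ne_zero _ (inv_ne_zero (hι hP2))) ?_
    have := hι (neg_ne_zero.mpr hW)
    simpa [Polynomial.wronskian, mul_comm] using this

theorem exists_isGenericPoint_of_wronskian_ne_zero (h2 : (2 : k) ≠ 0)
    {g : MvPolynomial (Fin 3) k} (hg : g.IsHomogeneous 4)
    (hgk : HasNoSingularZero g (AlgebraicClosure k)) (hH : H ≠ 0) (hPH : aeval P g = H ^ 2)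
    {i j : Fin 3} (hW : Polynomial.wronskian (P i) (P j) ≠ 0) (hx : AlgebraicIndependent k x) :
    ∃ (Q : Fin 3 → L) (ω : L), IsGenericPoint k Q ∧ ω ^ 2 = aeval Q g := by
  have hij : i ≠ j := fun h ↦ hW (by rw [h, Polynomial.wronskian_self_eq_zero])
  have hperm : ∀ i j : Fin 3, i ≠ j → ∃ e : Equiv.Perm (Fin 3), e 0 = i ∧ e 2 = j := by decide
  obtain ⟨e, rfl, rfl⟩ := hperm i j hij
  obtain ⟨Q, ω, hQ, hω⟩ := exists_isGenericPoint_of_wronskian_zero_two_ne_zero h2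
    (hg.rename_isHomogeneous (f := e.symm)) (hasNoSingularZero_rename hgk e.symm) (P := P ∘ e) hH
    (by rw [aeval_rename, Function.comp_assoc, e.self_comp_symm, Function.comp_id, hPH]) hW hx
  exact ⟨Q ∘ e.symm, ω, hQ.comp_equiv e.symm, by rw [hω, aeval_rename]⟩

end Wronskian

section SplitCurve

theorem exists_eq_smul_and_span_range_eq_top {ι R : Type*} [CommRing R] [IsDomain R]
    [IsPrincipalIdealRing R] {P : ι → R} (hP : P ≠ 0) :
    ∃ (h : R) (P' : ι → R), P = h • P' ∧ Ideal.span (Set.range P') = ⊤ := by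
  obtain ⟨h, hh : Ideal.span (Set.range P) = Ideal.span {h}⟩ :=
    (IsPrincipalIdealRing.principal (Ideal.span (Set.range P))).principal
  have hdvd (i : ι) : h ∣ P i := by
    rw [← Ideal.mem_span_singleton, ← hh]
    exact Ideal.subset_span ⟨i, rfl⟩
  choose P' hP' using hdvd
  obtain rfl : P = h • P' := funext hP'
  refine ⟨h, P', rfl, (Ideal.span_singleton_mul_right_inj (left_ne_zero_of_smul hP)).mp ?_⟩
  rw [Ideal.mul_top, Ideal.span_mul_span', Set.singleton_mul, ← Set.range_comp]
  exact hh

theorem derivative_eq_zero_of_wronskian_eq_zero {ι k : Type*} [Field k] {P : ι → Polynomial k}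
    (hspan : Ideal.span (Set.range P) = ⊤)
    (hW : ∀ i j, Polynomial.wronskian (P i) (P j) = 0) (i : ι) :
    Polynomial.derivative (P i) = 0 := by
  have hle : Ideal.span (Set.range P) ≤ Submodule.comap
      (LinearMap.mulLeft (Polynomial k) (Polynomial.derivative (P i))) (Ideal.span {P i}) := by
    rw [Ideal.span_le]
    rintro _ ⟨j, rfl⟩
    exact Ideal.mem_span_singleton.mpr ⟨Polynomial.derivative (P j), (sub_eq_zero.mp (hW i j)).symm⟩
  have hdvd : P i ∣ Polynomial.derivative (P i) := by
    have h1 := hle (hspan ▸ Submodule.mem_top : (1 : Polynomial k) ∈ _)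
    rwa [Submodule.mem_comap, LinearMap.mulLeft_apply, mul_one, Ideal.mem_span_singleton] at h1
  rcases eq_or_ne (P i) 0 with hi | hi
  · rw [hi, Polynomial.derivative_zero]
  · exact Polynomial.eq_zero_of_dvd_of_degree_lt hdvd (Polynomial.degree_derivative_lt hi)

/-- The curve parametrized by `P` is not a point, is not contained in the curve `g = 0`, and
splits in the double cover `w ^ 2 = g`: `P` lifts to `(P, H)`. -/
structure IsSplitCurve {σ k : Type*} [Field k] (g : MvPolynomial σ k) (P : σ → Polynomial k)
    (H : Polynomial k) : Prop where
  ne_zero : H ≠ 0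
  aeval_eq_sq : aeval P g = H ^ 2
  exists_linearIndependent : ∃ i j, LinearIndependent k ![P i, P j]

namespace IsSplitCurve

variable {σ k : Type*} [Field k] {g : MvPolynomial σ k} {P : σ → Polynomial k} {H : Polynomial k}

theorem exists_natDegree_ne_zero (hPH : IsSplitCurve g P H) : ∃ i, (P i).natDegree ≠ 0 := by
  by_contra! h
  obtain ⟨i, j, hij⟩ := hPH.exists_linearIndependent
  obtain ⟨a, ha⟩ := Polynomial.natDegree_eq_zero.mp (h i)
  obtain ⟨b, hb⟩ := Polynomial.natDegree_eq_zero.mp (h j)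
  rw [← ha, ← hb, LinearIndependent.pair_iff] at hij
  obtain ⟨rfl, hna⟩ := hij b (-a) (by simp [Polynomial.smul_C, mul_comm])
  obtain rfl := neg_eq_zero.mp hna
  exact one_ne_zero (hij 1 0 (by simp)).1

theorem exists_of_smul {n : ℕ} (hg : g.IsHomogeneous n) (hn : Even n) {h : Polynomial k}
    (hPH : IsSplitCurve g (h • P) H) : ∃ H', IsSplitCurve g P H' := by
  have hsq := hPH.aeval_eq_sq
  obtain ⟨r, rfl⟩ := hn
  rw [aeval_smul_of_isHomogeneous hg] at hsq
  obtain ⟨H', rfl⟩ : h ^ r ∣ H :=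
    (IsIntegrallyClosed.pow_dvd_pow_iff two_ne_zero).mp ⟨aeval P g, by rw [← hsq]; ring⟩
  obtain ⟨i, j, hij⟩ := hPH.exists_linearIndependent
  refine ⟨H', right_ne_zero_of_mul hPH.ne_zero, ?_, i, j, ?_⟩
  · have hr := left_ne_zero_of_mul hPH.ne_zero
    exact mul_left_cancel₀ (mul_ne_zero hr hr) (by rw [← pow_add, hsq]; ring)
  · rw [LinearIndependent.pair_iff] at hij ⊢
    refine fun a b hab ↦ hij a b ?_
    rw [Pi.smul_apply, Pi.smul_apply, smul_comm, smul_comm b, ← smul_add, hab, smul_zero]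

theorem of_expand {p : ℕ} (hp : 0 < p)
    (hPH : IsSplitCurve g (Polynomial.expand k p ∘ P) (Polynomial.expand k p H)) :
    IsSplitCurve g P H := by
  obtain ⟨i, j, hij⟩ := hPH.exists_linearIndependent
  refine ⟨fun h ↦ hPH.ne_zero (by rw [h, map_zero]), Polynomial.expand_injective hp ?_, i, j, ?_⟩
  · rw [map_pow, ← hPH.aeval_eq_sq]
    exact comp_aeval_apply P (Polynomial.expand k p) g
  · rw [LinearIndependent.pair_iff] at hij ⊢
    refine fun a b hab ↦ hij a b ?_
    rw [Function.comp_apply, Function.comp_apply, ← map_smul, ← map_smul, ← map_add, hab, map_zero]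

variable [Finite σ]

theorem derivative_eq_zero (h2 : (2 : k) ≠ 0) (hPH : IsSplitCurve g P H)
    (hP : ∀ i, Polynomial.derivative (P i) = 0) : Polynomial.derivative H = 0 := by
  have := Fintype.ofFinite σ
  have hsq : Polynomial.derivative (H ^ 2) = 0 := by
    rw [← hPH.aeval_eq_sq]
    refine (derivation_aeval (Polynomial.derivative' (R := k)) P g).trans ?_
    exact Finset.sum_eq_zero fun i _ ↦ by rw [Polynomial.derivative'_apply, hP i, smul_zero]
  rw [Polynomial.derivative_sq] at hsq
  simpa [h2, hPH.ne_zero] using hsq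

theorem exists_expand_eq (h2 : (2 : k) ≠ 0) (hPH : IsSplitCurve g P H)
    (hP : ∀ i, Polynomial.derivative (P i) = 0) :
    ∃ (p : ℕ) (P' : σ → Polynomial k) (H' : Polynomial k), 1 < p ∧ P = Polynomial.expand k p ∘ P' ∧
      H = Polynomial.expand k p H' := by
  obtain ⟨p, hp⟩ := CharP.exists k
  have hp0 : p ≠ 0 := by
    rintro rfl
    have := CharP.charP_to_charZero k
    obtain ⟨i, hi⟩ := hPH.exists_natDegree_ne_zero
    exact hi (Polynomial.derivative_eq_zero.mp (hP i))
  refine ⟨p, fun i ↦ Polynomial.contract p (P i), Polynomial.contract p H,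
    ((CharP.char_is_prime_or_zero k p).resolve_right hp0).one_lt, funext fun i ↦ ?_, ?_⟩
  · exact (Polynomial.expand_contract p (hP i) hp0).symm
  · exact (Polynomial.expand_contract p (hPH.derivative_eq_zero h2 hP) hp0).symm

/-- Divide by common factors and, in positive characteristic, factor through Frobenius, until the
parametrization becomes separable. -/
theorem exists_wronskian_ne_zero {n : ℕ} (h2 : (2 : k) ≠ 0) (hg : g.IsHomogeneous n) (hn : Even n)
    (hPH : IsSplitCurve g P H) :
    ∃ P' H', IsSplitCurve g P' H' ∧ ∃ i j, Polynomial.wronskian (P' i) (P' j) ≠ 0 := by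
  have := Fintype.ofFinite σ
  induction hN : ∑ i, (P i).natDegree using Nat.strong_induction_on generalizing P H with
  | _ N ih =>
  subst hN
  obtain ⟨i, hi⟩ := hPH.exists_natDegree_ne_zero
  obtain ⟨h, P', rfl, hspan⟩ := exists_eq_smul_and_span_range_eq_top (P := P)
    fun hP ↦ hi (by rw [hP, Pi.zero_apply, Polynomial.natDegree_zero])
  obtain ⟨H', hPH'⟩ := hPH.exists_of_smul hg hn
  by_cases hW : ∃ i j, Polynomial.wronskian (P' i) (P' j) ≠ 0
  · exact ⟨P', H', hPH', hW⟩
  push Not at hW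
  obtain ⟨p, P'', H'', hp, rfl, rfl⟩ :=
    hPH'.exists_expand_eq h2 (derivative_eq_zero_of_wronskian_eq_zero hspan hW)
  have hPH'' := hPH'.of_expand (by lia)
  refine ih _ ?_ hPH'' rfl
  obtain ⟨j, hj⟩ := hPH''.exists_natDegree_ne_zero
  have hpos : 0 < ∑ i, (P'' i).natDegree :=
    Finset.sum_pos' (fun _ _ ↦ Nat.zero_le _) ⟨j, Finset.mem_univ j, Nat.pos_of_ne_zero hj⟩
  have h0 : h ≠ 0 := fun h0 ↦ hi (by simp [h0])
  calc ∑ i, (P'' i).natDegree < (∑ i, (P'' i).natDegree) * p := lt_mul_of_one_lt_right hpos hp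
    _ = ∑ i, (Polynomial.expand k p (P'' i)).natDegree := by
      rw [Finset.sum_mul]
      exact Finset.sum_congr rfl fun i _ ↦ (Polynomial.natDegree_expand p (P'' i)).symm
    _ ≤ ∑ i, (h * Polynomial.expand k p (P'' i)).natDegree := by
      refine Finset.sum_le_sum fun i _ ↦ ?_
      rcases eq_or_ne (Polynomial.expand k p (P'' i)) 0 with hz | hz
      · rw [hz, mul_zero]
      · rw [Polynomial.natDegree_mul h0 hz]
        exact Nat.le_add_left _ _

end IsSplitCurve

end SplitCurve

section SquareRoot

theorem coeff_mem_of_coeff_sq_mem {L : Type*} [Field L] (h2 : (2 : L) ≠ 0) {S : Subfield L}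
    {H : Polynomial L} (h0 : H.coeff 0 ≠ 0) (h0S : H.coeff 0 ∈ S)
    (hsq : ∀ n, (H ^ 2).coeff n ∈ S) (n : ℕ) : H.coeff n ∈ S := by
  induction n using Nat.strong_induction_on with
  | _ n ih =>
  rcases n with _ | n
  · exact h0S
  have hmem : (H.divX ^ 2 * Polynomial.X).coeff n ∈ S := by
    rcases n with _ | n
    · simp
    · rw [Polynomial.coeff_mul_X, sq, Polynomial.coeff_mul]
      refine sum_mem fun ij hij ↦ ?_
      rw [Finset.HasAntidiagonal.mem_antidiagonal] at hij
      rw [Polynomial.coeff_divX, Polynomial.coeff_divX]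
      exact mul_mem (ih _ (by lia)) (ih _ (by lia))
  have hexpand : H ^ 2 = (H.divX ^ 2 * Polynomial.X +
      Polynomial.C (2 * H.coeff 0) * H.divX) * Polynomial.X + Polynomial.C (H.coeff 0 ^ 2) := by
    conv_lhs => rw [← H.divX_mul_X_add]
    simp only [map_mul, map_pow, map_ofNat]
    ring
  have hcoeff : H.coeff (n + 1) =
      ((H ^ 2).coeff (n + 1) - (H.divX ^ 2 * Polynomial.X).coeff n) / (2 * H.coeff 0) := by
    rw [eq_div_iff (mul_ne_zero h2 h0), hexpand, Polynomial.coeff_add, Polynomial.coeff_mul_X,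
      Polynomial.coeff_add, Polynomial.coeff_C_mul, Polynomial.coeff_C_succ, Polynomial.coeff_divX]
    ring
  rw [hcoeff]
  exact div_mem (sub_mem (hsq _) hmem) (mul_mem (ofNat_mem S 2) h0S)

theorem exists_eq_sq_of_map_eq_sq {k L : Type*} [Field k] [Field L] [Algebra k L]
    (h2 : (2 : k) ≠ 0) {F : Polynomial k} {H : Polynomial L}
    (hF : F.map (algebraMap k L) = H ^ 2) {c : k} (hc : c ≠ 0) (h0 : F.coeff 0 = c ^ 2) :
    ∃ H', F = H' ^ 2 := by
  set S := (algebraMap k L).fieldRange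
  have h2L : (2 : L) ≠ 0 := by
    rw [← map_ofNat (algebraMap k L)]
    exact (map_ne_zero _).mpr h2
  have hH0 : H.coeff 0 ^ 2 = algebraMap k L c ^ 2 := by
    rw [← map_pow, ← h0, ← Polynomial.coeff_map, hF, sq, sq, Polynomial.mul_coeff_zero]
  have hsq (n : ℕ) : (H ^ 2).coeff n ∈ S := ⟨F.coeff n, by rw [← hF, Polynomial.coeff_map]⟩
  have hmem : H.coeff 0 ∈ S := by
    rcases sq_eq_sq_iff_eq_or_eq_neg.mp hH0 with h | h
    exacts [h ▸ ⟨c, rfl⟩, h ▸ neg_mem ⟨c, rfl⟩]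
  have hne : H.coeff 0 ≠ 0 := by
    rw [← sq_eq_zero_iff.ne, hH0]
    exact pow_ne_zero 2 ((map_ne_zero _).mpr hc)
  obtain ⟨H', rfl⟩ := (Polynomial.mem_lifts H).mp <|
    (Polynomial.lifts_iff_coeff_lifts H).mpr (coeff_mem_of_coeff_sq_mem h2L hne hmem hsq)
  exact ⟨H', Polynomial.map_injective _ (algebraMap k L).injective
    (by rw [hF, Polynomial.map_pow])⟩

end SquareRoot

section Restriction

theorem exists_linearIndependent_of_forall_dvd_isUnit {ι σ k : Type*} [Field k] {d : ℕ}
    (hd : d ≠ 0) {p : ι → MvPolynomial σ k} (hp : ∀ i, (p i).IsHomogeneous d)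
    (hc : ∀ h, (∀ i, h ∣ p i) → IsUnit h) : ∃ i j, LinearIndependent k ![p i, p j] := by
  by_contra! hdep
  obtain ⟨i, hi⟩ : ∃ i, p i ≠ 0 := by
    by_contra! h
    exact not_isUnit_zero (hc 0 fun i ↦ by rw [h i])
  have hunit : IsUnit (p i) := by
    refine hc _ fun j ↦ ?_
    have hij := hdep i j
    rw [LinearIndependent.pair_iff' hi] at hij
    push Not at hij
    obtain ⟨a, ha⟩ := hij
    exact ⟨C a, by rw [← ha, smul_eq_C_mul, mul_comm]⟩
  have hconst := hunit.map constantCoeff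
  rw [constantCoeff_eq, (hp i).coeff_eq_zero (by simpa using hd.symm)] at hconst
  exact not_isUnit_zero hconst

variable {k : Type*} [Field k] {a b : Fin 2 → k}

theorem exists_mul_sub_mul_ne_zero (hb : b ≠ 0) : ∃ a : Fin 2 → k, a 0 * b 1 - a 1 * b 0 ≠ 0 := by
  by_contra! h
  refine hb (funext fun i ↦ ?_)
  fin_cases i
  · simpa using h ![0, 1]
  · simpa using h ![1, 0]

theorem eq_zero_of_aeval_linePoint_eq_zero (hab : a 0 * b 1 - a 1 * b 0 ≠ 0)
    {p : MvPolynomial (Fin 2) k} {n : ℕ} (hp : p.IsHomogeneous n)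
    (h : aeval (linePoint a b) p = 0) : p = 0 := by
  set L := FractionRing (MvPolynomial (Fin 2) k)
  set ι := IsScalarTower.toAlgHom k (MvPolynomial (Fin 2) k) L
  have hι : Function.Injective ι := IsFractionRing.injective (MvPolynomial (Fin 2) k) L
  set φ := Algebra.ofId k L
  set μ : MvPolynomial (Fin 2) k := C (a 0) * X 1 - C (a 1) * X 0 with hμ
  have hμ0 : ι μ ≠ 0 := by
    rw [map_ne_zero_iff ι hι]
    intro h0
    have := congrArg (eval b) h0
    simp [hμ, hab] at this
  set T := ι (C (b 1) * X 0 - C (b 0) * X 1) / ι μ with hT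
  have hX : φ (a 0 * b 1 - a 1 * b 0) • ι ∘ X = ι μ • (T • (φ ∘ a) + φ ∘ b) := by
    have hιC (c : k) : ι (C c) = φ c := ι.commutes c
    funext i
    simp only [Pi.smul_apply, Pi.add_apply, Function.comp_apply, smul_eq_mul, hT, mul_add,
      ← mul_assoc, mul_div_cancel₀ _ hμ0]
    fin_cases i <;> simp only [hμ, map_sub, map_mul, hιC, Fin.zero_eta, Fin.mk_one] <;> ring
  have hline := eval_aeval_linePoint (φ ∘ a) (φ ∘ b) T p
  rw [← map_aeval_linePoint, h, Polynomial.map_zero, Polynomial.eval_zero] at hline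
  have hscale := aeval_smul_of_isHomogeneous hp (φ (a 0 * b 1 - a 1 * b 0)) (ι ∘ X)
  rw [hX, aeval_smul_of_isHomogeneous hp, ← hline, mul_zero, eq_comm, mul_eq_zero] at hscale
  have hpX : aeval (ι ∘ X) p = ι p :=
    (comp_aeval_apply X ι p).symm.trans (by rw [aeval_X_left_apply])
  rw [hpX] at hscale
  exact (map_eq_zero_iff ι hι).mp (hscale.resolve_left (pow_ne_zero _ ((map_ne_zero φ).mpr hab)))

theorem exists_isSplitCurve {σ N : Type*} [Field N] [Algebra k N] (h2 : (2 : k) ≠ 0)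
    {g : MvPolynomial σ k} {m d : ℕ} (hg : g.IsHomogeneous m) (hm : m ≠ 0)
    (hd : d ≠ 0) {p : σ → MvPolynomial (Fin 2) k} (hp : ∀ i, (p i).IsHomogeneous d)
    (hcop : ∀ h, (∀ i, h ∣ p i) → IsUnit h) {G : MvPolynomial (Fin 2) N}
    (hG : map (algebraMap k N) (aeval p g) = G ^ 2) {c : k} (hc : c ≠ 0)
    (hbc : eval b (aeval p g) = c ^ 2) : ∃ P H, IsSplitCurve g P H := by
  have hb : b ≠ 0 := by
    rintro rfl
    rw [eval_zero, constantCoeff_eq,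
      (hg.aeval p hp).coeff_eq_zero (by simpa using ⟨hd, hm⟩)] at hbc
    exact pow_ne_zero 2 hc hbc.symm
  obtain ⟨a, hab⟩ := exists_mul_sub_mul_ne_zero hb
  have hcomp : aeval (fun i ↦ aeval (linePoint a b) (p i)) g = aeval (linePoint a b) (aeval p g) :=
    (comp_aeval_apply p (aeval (linePoint a b)) g).symm
  have h0 : (aeval (linePoint a b) (aeval p g)).coeff 0 = c ^ 2 := by
    rw [Polynomial.coeff_zero_eq_eval_zero, eval_aeval_linePoint, zero_smul, zero_add, ← hbc]
    exact aeval_eq_eval b ▸ rfl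
  have hmap := (map_aeval_linePoint (Algebra.ofId k N) a b (aeval p g)).trans
    (by rw [← aeval_map_algebraMap N, hG, map_pow])
  obtain ⟨H, hH⟩ := exists_eq_sq_of_map_eq_sq h2 hmap hc h0
  obtain ⟨i, j, hij⟩ := exists_linearIndependent_of_forall_dvd_isUnit hd hp hcop
  refine ⟨_, H, fun hH0 ↦ ?_, hcomp.trans hH, i, j, ?_⟩
  · rw [hH, hH0] at h0
    exact pow_ne_zero 2 hc (by simpa using h0.symm)
  · rw [LinearIndependent.pair_iff] at hij ⊢
    refine fun s t hst ↦ hij s t (eq_zero_of_aeval_linePoint_eq_zero hab (n := d) ?_ ?_)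
    · rw [smul_eq_C_mul, smul_eq_C_mul]
      exact ((hp i).C_mul s).add ((hp j).C_mul t)
    · rwa [map_add, map_smul, map_smul]

end Restriction

section Surface

theorem algebraicIndependent_algebraMap_fractionRing_comp_X (σ k : Type*) [Field k] :
    AlgebraicIndependent k
      (algebraMap (MvPolynomial σ k) (FractionRing (MvPolynomial σ k)) ∘ X) :=
  (algebraicIndependent_X σ k).map'
    (f := IsScalarTower.toAlgHom k (MvPolynomial σ k) (FractionRing (MvPolynomial σ k)))
    (IsFractionRing.injective _ _)

theorem exists_algebraicIndependent_sq_eq {k L : Type*} [Field k] [Field L] [Algebra k L]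
    {g : MvPolynomial (Fin 3) k} {n : ℕ} (hg : g.IsHomogeneous n) (hn : Even n) {Q : Fin 3 → L}
    (hQ : IsGenericPoint k Q) {ω : L} (hω : ω ^ 2 = aeval Q g) :
    ∃ u v ω : L, AlgebraicIndependent k ![u, v] ∧ ω ^ 2 = aeval ![u, v, 1] g := by
  have hQ2 := hQ.apply_ne_zero 2
  obtain ⟨r, rfl⟩ := hn
  refine ⟨Q 0 / Q 2, Q 1 / Q 2, ω / Q 2 ^ r,
    (isGenericPoint_iff_algebraicIndependent hQ2).mp hQ, ?_⟩
  have hscale : Q = Q 2 • ![Q 0 / Q 2, Q 1 / Q 2, 1] := by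
    funext i
    fin_cases i <;> simp [mul_div_cancel₀, hQ2]
  rw [hscale, aeval_smul_of_isHomogeneous hg] at hω
  rw [div_pow, hω]
  field_simp
  ring

end Surface

end DelPezzoUnirational

/-- Parametrized form of part (1) of **Theorem 1.2**. Let `k` be a field of characteristic
`≠ 2`, `g ∈ k[x,y,z]` homogeneous of degree 4 defining a smooth plane quartic `B`, and let
`X` be the del Pezzo surface of degree 2 given by `w² = g` in `P(1,1,1,2)`. Let `p, q, r`
be homogeneous of degree `d ≥ 1` in `k[s,t]` without nonconstant common factor and set
`G = g(p,q,r)`. If `G ≠ 0`, `G` is a square in `k̄[s,t]`, and `G(s₀,t₀)` is a nonzero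
square in `k` for some `(s₀,t₀) ∈ k²`, then `X` is unirational over `k`. -/
theorem delPezzo_deg_two_unirational_of_even_tangency_curve
    (k : Type*) [Field k] (hchar : (2 : k) ≠ 0)
    (g : MvPolynomial (Fin 3) k) (hg : g.IsHomogeneous 4)
    (hBsmooth : ¬ ∃ P : Fin 3 → AlgebraicClosure k, P ≠ 0 ∧
        eval P (map (algebraMap k (AlgebraicClosure k)) g) = 0 ∧
        ∀ i : Fin 3, eval P (pderiv i (map (algebraMap k (AlgebraicClosure k)) g)) = 0)
    (d : ℕ) (hd : 1 ≤ d)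
    (p q r : MvPolynomial (Fin 2) k)
    (hp : p.IsHomogeneous d) (hq : q.IsHomogeneous d) (hr : r.IsHomogeneous d)
    (hcoprime : ∀ h : MvPolynomial (Fin 2) k, h ∣ p → h ∣ q → h ∣ r → IsUnit h)
    (G : MvPolynomial (Fin 2) k) (hG : G = aeval ![p, q, r] g)
    (hG0 : G ≠ 0)
    (hGsq : ∃ H : MvPolynomial (Fin 2) (AlgebraicClosure k),
        map (algebraMap k (AlgebraicClosure k)) G = H ^ 2)
    (hGval : ∃ s₀ t₀ : k, eval ![s₀, t₀] G ≠ 0 ∧ ∃ c : k, eval ![s₀, t₀] G = c ^ 2) :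
    ∃ u v ω : FractionRing (MvPolynomial (Fin 2) k),
      AlgebraicIndependent k ![u, v] ∧ ω ^ 2 = aeval ![u, v, 1] g := by
  subst hG
  obtain ⟨Γ, hΓ⟩ := hGsq
  obtain ⟨s₀, t₀, hne, c, hc⟩ := hGval
  have hpqr : ∀ i, (![p, q, r] i).IsHomogeneous d := by
    simp [Fin.forall_fin_succ, hp, hq, hr]
  have hcop (h) (hh : ∀ i, h ∣ ![p, q, r] i) : IsUnit h := hcoprime h (hh 0) (hh 1) (hh 2)
  have hc0 : c ≠ 0 := fun h ↦ hne (by rw [hc, h, zero_pow two_ne_zero])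
  obtain ⟨P, H, hPH⟩ := DelPezzoUnirational.exists_isSplitCurve hchar hg four_ne_zero
    (Nat.one_le_iff_ne_zero.mp hd) hpqr hcop hΓ hc0 hc
  obtain ⟨P, H, hPH, i, j, hW⟩ := hPH.exists_wronskian_ne_zero hchar hg (by decide)
  have hgk := DelPezzoUnirational.hasNoSingularZero_iff_eval.mpr hBsmooth
  obtain ⟨Q, ω, hQ, hω⟩ := DelPezzoUnirational.exists_isGenericPoint_of_wronskian_ne_zero hchar hg
    hgk hPH.ne_zero hPH.aeval_eq_sq hW
    (DelPezzoUnirational.algebraicIndependent_algebraMap_fractionRing_comp_X (Fin 2) k)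
  exact DelPezzoUnirational.exists_algebraicIndependent_sq_eq hg (by decide) hQ hω
end

section
/- There exist elements u, v, ω of the rational function field F₃(s,t) in two variables over the field F₃ = Z/3Z such that u and v are algebraically independent over F₃ and −ω² = (u² + v²)² + v³ − v. -/
/-!
A line in the plane through the image of a point `p` of `X₁` pulls back to a genus one curve on
`X₁`, and the divisor class `2H - 3p` on it (`H` the hyperplane class) is represented by a point
of `X₁`, rational in `p` and the line. Letting `p` run through a rational curve on `X₁` and the
line through `p` meet `z = 0` in a varying point gives a rational map from the plane to `X₁`.
The line `z = 0` is a bitangent of the branch quartic. When `p` tends to a point over `z = 0`, so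
does the new point, and its limit still moves with the chosen line. The closure of the image is
thus irreducible and contains infinitely many points over `z = 0` besides points off it, so it is
a surface.
-/

section AlgebraicIndependence

open MvPolynomial

variable {ι F P K k : Type*}

theorem aeval_mul_of_isHomogeneous [CommSemiring F] [CommSemiring P] [Algebra F P]
    {Q : MvPolynomial ι F} {n : ℕ} (hQ : Q.IsHomogeneous n) (c : P) (g : ι → P) :
    aeval (fun i ↦ c * g i) Q = c ^ n * aeval g Q := by
  simp only [aeval_def, eval₂_eq, Finset.mul_sum]
  refine Finset.sum_congr rfl fun d hd ↦ ?_
  rw [hQ.degree_eq_sum_deg_support hd, ← Finset.prod_pow_eq_pow_sum]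
  simp only [mul_pow, Finset.prod_mul_distrib]
  ring

theorem homogeneousComponent_totalDegree_ne_zero [CommSemiring F] {Q : MvPolynomial ι F}
    (hQ : Q ≠ 0) : homogeneousComponent Q.totalDegree Q ≠ 0 := by
  obtain ⟨d, hd, hdeg⟩ := Finset.exists_mem_eq_sup Q.support (support_nonempty.mpr hQ)
    fun d ↦ d.sum fun _ e ↦ e
  refine ne_zero_iff.mpr ⟨d, ?_⟩
  rw [coeff_homogeneousComponent, if_pos (by exact hdeg.symm)]
  exact mem_support_iff.mp hd

theorem pow_totalDegree_mul_aeval [CommSemiring F] [CommSemiring P] [Algebra F P]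
    (Q : MvPolynomial ι F) (c : P) (g : ι → P) :
    c ^ Q.totalDegree * aeval g Q = ∑ j ∈ Finset.range (Q.totalDegree + 1),
      c ^ (Q.totalDegree - j) * aeval (fun i ↦ c * g i) (homogeneousComponent j Q) := by
  nth_rw 2 [← sum_homogeneousComponent Q]
  rw [map_sum, Finset.mul_sum]
  refine Finset.sum_congr rfl fun j hj ↦ ?_
  rw [aeval_mul_of_isHomogeneous (homogeneousComponent_isHomogeneous j Q), ← mul_assoc, ← pow_add,
    Nat.sub_add_cancel (Finset.mem_range_succ_iff.mp hj)]

theorem algebraicIndependent_div_of_map_eq_zero [CommRing F] [CommRing P] [Field K] [CommRing k]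
    [Algebra F P] [Algebra F K] [Algebra F k] (ψ : P →ₐ[F] K) (hψ : Function.Injective ψ)
    (φ : P →ₐ[F] k) (A : ι → P) {C : P} (hC : C ≠ 0) (hφC : φ C = 0)
    (hφA : ∀ (n : ℕ) (Q : MvPolynomial ι F), Q.IsHomogeneous n →
      aeval (fun i ↦ φ (A i)) Q = 0 → Q = 0) :
    AlgebraicIndependent F fun i ↦ ψ (A i) / ψ C := by
  rw [algebraicIndependent_iff]
  intro Q hQ
  by_contra hQ0
  have hψC : ψ C ≠ 0 := (map_ne_zero_iff ψ hψ).mpr hC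
  have cleared : ∑ j ∈ Finset.range (Q.totalDegree + 1),
      C ^ (Q.totalDegree - j) * aeval A (homogeneousComponent j Q) = 0 := by
    refine hψ ?_
    have h := pow_totalDegree_mul_aeval Q (ψ C) fun i ↦ ψ (A i) / ψ C
    simp only [hQ, mul_zero, mul_div_cancel₀ _ hψC] at h
    simp only [map_sum, map_mul, map_pow, map_zero, comp_aeval_apply, h]
  have leading : aeval (fun i ↦ φ (A i)) (homogeneousComponent Q.totalDegree Q) = 0 := by
    have h := congrArg φ cleared
    rw [map_sum, Finset.sum_range_succ, Finset.sum_eq_zero, zero_add] at h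
    · simpa [comp_aeval_apply] using h
    · intro j hj
      have : Q.totalDegree - j ≠ 0 := Nat.sub_ne_zero_of_lt (Finset.mem_range.mp hj)
      simp [hφC, this]
  exact homogeneousComponent_totalDegree_ne_zero hQ0
    (hφA _ _ (homogeneousComponent_isHomogeneous _ Q) leading)

theorem eq_zero_of_isHomogeneous_of_transcendental [CommRing F] [CommRing k] [IsDomain k]
    [Algebra F k] {r b : k} (hr : Transcendental F r) (hb : b ≠ 0) {n : ℕ}
    {Q : MvPolynomial (Fin 2) F} (hQ : Q.IsHomogeneous n) (h : aeval ![b * r, b] Q = 0) :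
    Q = 0 := by
  have scale : ![b * r, b] = fun i ↦ b * ![r, 1] i := by
    ext i; fin_cases i <;> simp
  have dehom : Polynomial.aeval r (aeval ![Polynomial.X, 1] Q : Polynomial F) = 0 := by
    rw [scale, aeval_mul_of_isHomogeneous hQ] at h
    have h' := (mul_eq_zero.mp h).resolve_left (pow_ne_zero n hb)
    have comp : (Polynomial.aeval r).comp (aeval ![Polynomial.X, 1]) =
        (aeval ![r, 1] : MvPolynomial (Fin 2) F →ₐ[F] k) := by
      ext i; fin_cases i <;> simp
    exact (DFunLike.congr_fun comp Q).trans h'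
  rw [← Polynomial.homogenize_eq_of_isHomogeneous hQ (transcendental_iff.mp hr _ dehom),
    Polynomial.homogenize_zero]

theorem algebraicIndependent_pair_div_of_map_eq_zero [CommRing F] [CommRing P] [Field K]
    [CommRing k] [IsDomain k] [Algebra F P] [Algebra F K] [Algebra F k] (ψ : P →ₐ[F] K)
    (hψ : Function.Injective ψ) (φ : P →ₐ[F] k) {A B C : P} (hC : C ≠ 0) (hφC : φ C = 0)
    {r : k} (hr : Transcendental F r) (hφB : φ B ≠ 0) (hφA : φ A = φ B * r) :
    AlgebraicIndependent F ![ψ A / ψ C, ψ B / ψ C] := by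
  have h := algebraicIndependent_div_of_map_eq_zero ψ hψ φ ![A, B] hC hφC fun n Q hQ h0 ↦
    eq_zero_of_isHomogeneous_of_transcendental hr hφB hQ <| by
      convert h0 using 3
      ext i; fin_cases i <;> simp [hφA]
  convert h using 1
  ext i; fin_cases i <;> simp

end AlgebraicIndependence

section ResidualPoint

variable {R : Type*} [CommRing R]

-- `w * (1 + c₁ / (2 * c₀) * s - Δ / (8 * c₀ ^ 2) * s ^ 2)` is the parabola whose negated square
-- agrees with the quartic `∑ cⱼ * s ^ j` up to order 3 at `s = 0`, and `hDE` says that their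
-- difference vanishes again at `s = -8 * c₀ * D / E`.
theorem neg_sq_eq_binary_quartic {c₀ c₁ c₂ c₃ c₄ Δ w D E : R} (hw : -w ^ 2 = c₀)
    (hΔ : Δ = c₁ ^ 2 - 4 * c₀ * c₂)
    (hDE : D * (64 * c₀ ^ 3 * c₄ - Δ ^ 2) = E * (8 * c₀ ^ 2 * c₃ + c₁ * Δ)) :
    -(w * (E ^ 2 - 4 * c₁ * D * E - 8 * Δ * D ^ 2)) ^ 2 =
      c₀ * E ^ 4 + c₁ * E ^ 3 * (-8 * c₀ * D) + c₂ * E ^ 2 * (-8 * c₀ * D) ^ 2 +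
        c₃ * E * (-8 * c₀ * D) ^ 3 + c₄ * (-8 * c₀ * D) ^ 4 := by
  subst hw hΔ
  linear_combination 64 * w ^ 2 * D ^ 3 * hDE

/-- The quartic form cutting out the branch curve: `X₁` is `-w ^ 2 = branchQuartic x y z`. -/
def branchQuartic (x y z : R) : R := (x ^ 2 + y ^ 2) ^ 2 + y ^ 3 * z - y * z ^ 3

theorem neg_sq_div_eq_of_neg_sq_eq_branchQuartic {K : Type*} [Field K] {x y z w : K} (hz : z ≠ 0)
    (hw : -w ^ 2 = branchQuartic x y z) :
    -(w / z ^ 2) ^ 2 = ((x / z) ^ 2 + (y / z) ^ 2) ^ 2 + (y / z) ^ 3 - y / z := by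
  rw [branchQuartic] at hw
  field_simp
  linear_combination hw

/-- In characteristic 3, the coefficient of `s` in the branch quartic at
`(x + a * s, y + b * s, z)`, that is, along the line joining `(x : y : z)` to `(a : b : 0)`. -/
def lineCoeffOne (x y z a b : R) : R := (x ^ 2 + y ^ 2) * (a * x + b * y) - b * z ^ 3

/-- In characteristic 3, the coefficient of `s ^ 3` in the branch quartic at
`(x + a * s, y + b * s, z)`. -/
def lineCoeffThree (x y z a b : R) : R := (a * x + b * y) * (a ^ 2 + b ^ 2) + b ^ 3 * z

/-- In characteristic 3, the discriminant of the part of degree at most 2 in `s` of the branch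
quartic at `(x + a * s, y + b * s, z)`. It governs the quadratic term of the parabola osculating
`X₁` over the line. -/
def jetDiscr (x y z a b : R) : R :=
  lineCoeffOne x y z a b ^ 2 + branchQuartic x y z * (a * y - b * x) ^ 2

/-- The quotient by `z` of `jetDiscr x y z a b - (x ^ 2 + y ^ 2) ^ 3 * (a ^ 2 + b ^ 2)`, which
vanishes on `z = 0` because the branch quartic is the square of `x ^ 2 + y ^ 2` there. -/
def jetDiscrQuot (x y z a b : R) : R :=
  (y ^ 3 - y * z ^ 2) * (a * y - b * x) ^ 2 +
    b * z ^ 2 * ((x ^ 2 + y ^ 2) * (a * x + b * y) + b * z ^ 3)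

/-- With `residualDen`, the position `s = branchQuartic * residualNum / residualDen` of the residual
point, where the parabola osculating `X₁` to order 3 at `s = 0` over the line
`(x + a * s : y + b * s : z)` meets `X₁` again. Both polynomials are freed of their common factor
`z`, so that they can be evaluated meaningfully on `z = 0`. -/
def residualNum (x y z a b : R) : R :=
  (a * x + b * y) * (a ^ 2 + b ^ 2) *
      (z * (y ^ 3 - y * z ^ 2) ^ 2 - (x ^ 2 + y ^ 2) ^ 2 * (y ^ 3 - y * z ^ 2)) +
    b ^ 3 * branchQuartic x y z ^ 2 -
    (x ^ 2 + y ^ 2) * (a * x + b * y) * jetDiscrQuot x y z a b + b * z ^ 2 * jetDiscr x y z a b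

/-- The denominator of the position of the residual point, see `residualNum`. -/
def residualDen (x y z a b : R) : R :=
  z * jetDiscrQuot x y z a b ^ 2 - (a ^ 2 + b ^ 2) ^ 2 * z ^ 2 * (y ^ 3 - y * z ^ 2) ^ 3 -
    (x ^ 2 + y ^ 2) ^ 3 * (a ^ 2 + b ^ 2) * jetDiscrQuot x y z a b

/-- The first homogeneous coordinate of the image in the plane of the residual point on the line
joining `(x : y : z)` to `(a : b : 0)`. -/
def residualX (x y z a b : R) : R :=
  x * residualDen x y z a b + a * (branchQuartic x y z * residualNum x y z a b)

/-- The second homogeneous coordinate of the residual point, see `residualX`. -/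
def residualY (x y z a b : R) : R :=
  y * residualDen x y z a b + b * (branchQuartic x y z * residualNum x y z a b)

/-- The third homogeneous coordinate of the residual point, see `residualX`. -/
def residualZ (x y z a b : R) : R := z * residualDen x y z a b

variable [CharP R 3]

theorem branchQuartic_line (x y z a b c s : R) :
    branchQuartic (x * c + a * s) (y * c + b * s) (z * c) =
      branchQuartic x y z * c ^ 4 + lineCoeffOne x y z a b * c ^ 3 * s -
        (a * y - b * x) ^ 2 * c ^ 2 * s ^ 2 + lineCoeffThree x y z a b * c * s ^ 3 +
        (a ^ 2 + b ^ 2) ^ 2 * s ^ 4 := by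
  simp only [branchQuartic, lineCoeffOne, lineCoeffThree]
  grind

theorem jetDiscr_eq (x y z a b : R) :
    jetDiscr x y z a b =
      (x ^ 2 + y ^ 2) ^ 3 * (a ^ 2 + b ^ 2) + z * jetDiscrQuot x y z a b := by
  simp only [jetDiscr, jetDiscrQuot, lineCoeffOne, branchQuartic]
  grind

theorem mul_residualNum (x y z a b : R) :
    z * residualNum x y z a b =
      branchQuartic x y z ^ 2 * lineCoeffThree x y z a b -
        lineCoeffOne x y z a b * jetDiscr x y z a b := by
  simp only [residualNum, jetDiscr_eq, lineCoeffOne, lineCoeffThree, branchQuartic]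
  grind

theorem mul_residualDen (x y z a b : R) :
    z * residualDen x y z a b =
      jetDiscr x y z a b ^ 2 - branchQuartic x y z ^ 3 * (a ^ 2 + b ^ 2) ^ 2 := by
  simp only [residualDen, jetDiscr_eq, branchQuartic]
  grind

theorem exists_neg_sq_eq_branchQuartic_residual {x y z w : R} (hw : -w ^ 2 = branchQuartic x y z)
    (a b : R) :
    ∃ W : R, -W ^ 2 =
      branchQuartic (residualX x y z a b) (residualY x y z a b) (residualZ x y z a b) := by
  have h4 : (4 : R) = 1 := by grind
  have h8 : (8 : R) = -1 := by grind
  have h64 : (64 : R) = 1 := by grind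
  have hΔ : jetDiscr x y z a b =
      lineCoeffOne x y z a b ^ 2 - 4 * branchQuartic x y z * -(a * y - b * x) ^ 2 := by
    rw [h4, jetDiscr]
    ring
  have hDE : residualNum x y z a b *
        (64 * branchQuartic x y z ^ 3 * (a ^ 2 + b ^ 2) ^ 2 - jetDiscr x y z a b ^ 2) =
      residualDen x y z a b * (8 * branchQuartic x y z ^ 2 * lineCoeffThree x y z a b +
        lineCoeffOne x y z a b * jetDiscr x y z a b) := by
    rw [h8, h64]
    linear_combination residualNum x y z a b * mul_residualDen x y z a b -
      residualDen x y z a b * mul_residualNum x y z a b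
  refine ⟨_, (neg_sq_eq_binary_quartic hw hΔ hDE).trans ?_⟩
  rw [residualX, residualY, residualZ, branchQuartic_line, h8]
  ring

theorem residualX_neg_one_neg_one_zero (m : R) :
    residualX (-1) (-1) 0 (1 + m) (1 - m) = m ^ 4 := by
  simp only [residualX, residualDen, residualNum, jetDiscr, jetDiscrQuot, lineCoeffOne,
    branchQuartic]
  grind

theorem residualY_neg_one_neg_one_zero (m : R) :
    residualY (-1) (-1) 0 (1 + m) (1 - m) = m ^ 3 := by
  simp only [residualY, residualDen, residualNum, jetDiscr, jetDiscrQuot, lineCoeffOne,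
    branchQuartic]
  grind

end ResidualPoint

section RationalCurve

variable {R : Type*} [CommRing R]

/-- The first coordinate of a rational curve on `X₁` in characteristic 3, whose `w`-coordinate is
`t * (t ^ 2 - 1) * (t ^ 4 + 1) * (t ^ 8 + 1)`. -/
def curveX (t : R) : R := t ^ 2 * (t ^ 2 - 1)

/-- The second coordinate of the rational curve on `X₁`, see `curveX`. -/
def curveY (t : R) : R := t ^ 2 * (t ^ 2 - 1) ^ 2

/-- The third coordinate of the rational curve on `X₁`, see `curveX`. -/
def curveZ (t : R) : R := t ^ 8 - t ^ 2 + 1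

theorem neg_sq_eq_branchQuartic_curve [CharP R 3] (t : R) :
    -(t * (t ^ 2 - 1) * (t ^ 4 + 1) * (t ^ 8 + 1)) ^ 2 =
      branchQuartic (curveX t) (curveY t) (curveZ t) := by
  simp only [branchQuartic, curveX, curveY, curveZ]
  grind

theorem curveX_of_sq_eq_neg_one [CharP R 3] {i : R} (hi : i ^ 2 = -1) : curveX i = -1 := by
  rw [curveX, hi]
  grind

theorem curveY_of_sq_eq_neg_one [CharP R 3] {i : R} (hi : i ^ 2 = -1) : curveY i = -1 := by
  rw [curveY, hi]
  grind

theorem curveZ_of_sq_eq_neg_one [CharP R 3] {i : R} (hi : i ^ 2 = -1) : curveZ i = 0 := by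
  rw [curveZ, hi]
  grind

end RationalCurve

section Parametrization

variable {R S : Type*} [CommRing R] [CommRing S]

/-- The first coordinate of the parametrization of `X₁`: the residual point of the point `t` of the
rational curve in the direction `(1 + m : 1 - m : 0)`. The direction is normalized so that the limit
on `z = 0` at `t ^ 2 = -1` is `(m : 1 : 0)`. -/
def paramX (t m : R) : R := residualX (curveX t) (curveY t) (curveZ t) (1 + m) (1 - m)

/-- The second coordinate of the parametrization of `X₁`, see `paramX`. -/
def paramY (t m : R) : R := residualY (curveX t) (curveY t) (curveZ t) (1 + m) (1 - m)

/-- The third coordinate of the parametrization of `X₁`, see `paramX`. -/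
def paramZ (t m : R) : R := residualZ (curveX t) (curveY t) (curveZ t) (1 + m) (1 - m)

theorem map_paramX (f : R →+* S) (t m : R) : f (paramX t m) = paramX (f t) (f m) := by
  simp [paramX, residualX, residualDen, residualNum, jetDiscr, jetDiscrQuot, lineCoeffOne,
    branchQuartic, curveX, curveY, curveZ]

theorem map_paramY (f : R →+* S) (t m : R) : f (paramY t m) = paramY (f t) (f m) := by
  simp [paramY, residualY, residualDen, residualNum, jetDiscr, jetDiscrQuot, lineCoeffOne,
    branchQuartic, curveX, curveY, curveZ]

theorem map_paramZ (f : R →+* S) (t m : R) : f (paramZ t m) = paramZ (f t) (f m) := by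
  simp [paramZ, residualZ, residualDen, jetDiscrQuot, curveX, curveY, curveZ]

theorem paramZ_zero_zero : paramZ (0 : R) 0 = 1 := by
  simp [paramZ, residualZ, residualDen, jetDiscrQuot, curveX, curveY, curveZ]

variable [CharP R 3]

theorem exists_neg_sq_eq_branchQuartic_param (t m : R) :
    ∃ W : R, -W ^ 2 = branchQuartic (paramX t m) (paramY t m) (paramZ t m) :=
  exists_neg_sq_eq_branchQuartic_residual (neg_sq_eq_branchQuartic_curve t) _ _

theorem paramX_of_sq_eq_neg_one {i : R} (hi : i ^ 2 = -1) (m : R) : paramX i m = m ^ 4 := by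
  rw [paramX, curveX_of_sq_eq_neg_one hi, curveY_of_sq_eq_neg_one hi, curveZ_of_sq_eq_neg_one hi,
    residualX_neg_one_neg_one_zero]

theorem paramY_of_sq_eq_neg_one {i : R} (hi : i ^ 2 = -1) (m : R) : paramY i m = m ^ 3 := by
  rw [paramY, curveX_of_sq_eq_neg_one hi, curveY_of_sq_eq_neg_one hi, curveZ_of_sq_eq_neg_one hi,
    residualY_neg_one_neg_one_zero]

theorem paramZ_of_sq_eq_neg_one {i : R} (hi : i ^ 2 = -1) (m : R) : paramZ i m = 0 := by
  rw [paramZ, curveZ_of_sq_eq_neg_one hi, residualZ, zero_mul]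

end Parametrization

section Dominance

open MvPolynomial

theorem paramZ_X_ne_zero (R : Type*) [CommRing R] [Nontrivial R] :
    paramZ (X 0 : MvPolynomial (Fin 2) R) (X 1) ≠ 0 :=
  ne_zero_of_map (f := constantCoeff) <| by simp [map_paramZ, paramZ_zero_zero]

variable {F K : Type*} [Field F] [Field K] [Algebra F K] {s t : K}

theorem paramZ_ne_zero (hst : AlgebraicIndependent F ![s, t]) : paramZ s t ≠ 0 := by
  have h := (map_ne_zero_iff _ hst).mpr (paramZ_X_ne_zero F)
  rw [← RingHom.coe_coe, map_paramZ] at h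
  simpa using h

theorem algebraicIndependent_param [CharP F 3] (hst : AlgebraicIndependent F ![s, t]) :
    AlgebraicIndependent F ![paramX s t / paramZ s t, paramY s t / paramZ s t] := by
  obtain ⟨i, hi⟩ : ∃ i : AlgebraicClosure F, i ^ 2 = -1 :=
    IsAlgClosed.exists_pow_nat_eq _ two_pos
  let m : Polynomial (AlgebraicClosure F) := Polynomial.X
  let φ : MvPolynomial (Fin 2) F →ₐ[F] Polynomial (AlgebraicClosure F) :=
    aeval ![Polynomial.C i, m]
  let ψ : MvPolynomial (Fin 2) F →ₐ[F] K := aeval ![s, t]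
  have hi' : Polynomial.C i ^ 2 = -1 := by rw [← map_pow, hi, map_neg, map_one]
  have hm : Transcendental F m :=
    (Polynomial.transcendental_X (AlgebraicClosure F)).restrictScalars
      (algebraMap F (AlgebraicClosure F)).injective
  have hφX : φ (paramX (X 0) (X 1)) = m ^ 4 := by
    simpa [φ, paramX_of_sq_eq_neg_one hi'] using map_paramX φ.toRingHom (X 0) (X 1)
  have hφY : φ (paramY (X 0) (X 1)) = m ^ 3 := by
    simpa [φ, paramY_of_sq_eq_neg_one hi'] using map_paramY φ.toRingHom (X 0) (X 1)
  have hφZ : φ (paramZ (X 0) (X 1)) = 0 := by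
    simpa [φ, paramZ_of_sq_eq_neg_one hi'] using map_paramZ φ.toRingHom (X 0) (X 1)
  have key := algebraicIndependent_pair_div_of_map_eq_zero ψ hst φ (paramZ_X_ne_zero F) hφZ hm
    (hφY ▸ pow_ne_zero 3 Polynomial.X_ne_zero) (by rw [hφX, hφY, pow_succ])
  rw [← RingHom.coe_coe, map_paramX, map_paramY, map_paramZ] at key
  simpa [ψ] using key

end Dominance

theorem exists_algebraicIndependent_pair (F : Type*) [Field F] :
    ∃ s t : FractionRing (MvPolynomial (Fin 2) F), AlgebraicIndependent F ![s, t] := by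
  let P := MvPolynomial (Fin 2) F
  let K := FractionRing P
  have h : AlgebraicIndependent F fun i ↦ algebraMap P K (MvPolynomial.X i) :=
    (MvPolynomial.algebraicIndependent_X (Fin 2) F).map' (f := IsScalarTower.toAlgHom F P K)
      (IsFractionRing.injective P K)
  refine ⟨algebraMap P K (MvPolynomial.X 0), algebraMap P K (MvPolynomial.X 1), ?_⟩
  convert h using 1
  ext i; fin_cases i <;> rfl

theorem X1_unirational_general (F : Type*) [Field F] [CharP F 3] :
    ∃ u v ω : FractionRing (MvPolynomial (Fin 2) F),
      AlgebraicIndependent F ![u, v] ∧ -ω ^ 2 = (u ^ 2 + v ^ 2) ^ 2 + v ^ 3 - v := by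
  let K := FractionRing (MvPolynomial (Fin 2) F)
  have : CharP K 3 := charP_of_injective_algebraMap (algebraMap F K).injective 3
  obtain ⟨s, t, hst⟩ := exists_algebraicIndependent_pair F
  obtain ⟨W, hW⟩ := exists_neg_sq_eq_branchQuartic_param s t
  exact ⟨_, _, _, algebraicIndependent_param hst,
    neg_sq_div_eq_of_neg_sq_eq_branchQuartic (paramZ_ne_zero hst) hW⟩

/-- Unirationality of the del Pezzo surface `X₁ : −w² = (x²+y²)² + y³z − yz³` of degree 2
over `F₃` (case `i = 1` of Theorem 3.3): there exist `u, v, ω` in the rational function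
field `F₃(s,t)` with `u, v` algebraically independent over `F₃` and
`−ω² = (u² + v²)² + v³ − v`. -/
theorem X1_unirational :
    ∃ u v ω : FractionRing (MvPolynomial (Fin 2) (ZMod 3)),
      AlgebraicIndependent (ZMod 3) ![u, v] ∧
      -ω ^ 2 = (u ^ 2 + v ^ 2) ^ 2 + v ^ 3 - v :=
  X1_unirational_general (ZMod 3)
end

section
/- There exist elements u, v, ω of the rational function field F₃(s,t) in two variables over the field F₃ = Z/3Z such that u and v are algebraically independent over F₃ and −ω² = u⁴ + v³ − v. -/
/-! On the double cover `−ω² = u⁴ + v³ − v` of the plane, the preimage of a line through `(x, y)` is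
a curve of genus one passing through each point `(x, y, w)` above it. Write the slope of the line as
`x³ − w²t` and its points as `(x + l, y + l(x³ − w²t))`. The function `ω − w(1 − tl)²` on this curve
has four zeros, and in characteristic `3` three of them lie at `(x, y, w)`, because
`(1 − tl)² = 1 + tl + t²l²`. So the fourth is rational over the field of `x, y, w, t`. Letting
`(x, y, w)` run along a rational curve with parameter `s` gives a map from the `(s, t)`-plane.

The map is dominant: eliminating `t` shows that `s`, and then `t`, is algebraic over the field of
`u` and `v` (the eliminant takes the values `v⁴` and `(v − 1)⁴` at `s = 0` and `s = 1`, so it is not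
identically zero). Hence these have the same transcendence degree as `s` and `t`. -/

section AlgebraicIndependence

variable {ι R A : Type*} [CommRing R] [CommRing A] [Algebra R A]

lemma aeval_ne_zero_of_eval_ne_zero {x : ι → A} (hx : AlgebraicIndependent R x) (a : ι → R)
    {p : MvPolynomial ι R} (hp : MvPolynomial.eval a p ≠ 0) : MvPolynomial.aeval x p ≠ 0 :=
  fun h ↦ hp (by rw [hx.eq_zero_of_aeval_eq_zero p h, map_zero])

lemma algebraicIndependent_of_isAlgebraic_adjoin [IsDomain A] [Finite ι] {x y : ι → A}
    (hx : AlgebraicIndependent R x)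
    (h : ∀ i, IsAlgebraic (Algebra.adjoin R (Set.range y)) (x i)) : AlgebraicIndependent R y := by
  have := (algebraMap R A).domain_nontrivial
  have := (faithfulSMul_iff_algebraMap_injective R A).mpr hx.algebraMap_injective
  let M := AlgebraicIndependent.matroid R A
  have range_subset_closure : Set.range x ⊆ M.closure (Set.range y) := by
    rw [AlgebraicIndependent.matroid_closure_eq]
    exact Set.range_subset_iff.mpr h
  have card_le_rank : ENat.card ι ≤ M.eRk (Set.range y) :=
    calc ENat.card ι
        ≤ (Set.range x).encard := hx.injective.encard_range
      _ ≤ M.eRk (M.closure (Set.range y)) :=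
        Matroid.Indep.encard_le_eRk_of_subset hx.to_subtype_range range_subset_closure
      _ = M.eRk (Set.range y) := M.eRk_closure_eq _
  have encard_le_card : (Set.range y).encard ≤ ENat.card ι := by
    simpa [Set.encard_univ] using Set.encard_image_le y Set.univ
  have y_injective : Function.Injective y := by
    rw [← Set.injOn_univ]
    refine Set.finite_univ.injOn_of_encard_image_eq ?_
    rw [Set.image_univ, Set.encard_univ]
    exact encard_le_card.antisymm (card_le_rank.trans (M.eRk_le_encard _))
  exact .of_subtype_range y_injective <|
    (M.isRkFinite_of_finite (Set.finite_range y)).indep_of_encard_le_eRk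
      (encard_le_card.trans card_le_rank)

end AlgebraicIndependence

section BaseCurve

variable {R : Type*} [CommRing R]

/-- The `x`-coordinate of a rational curve on `X₂ ⊂ ℙ(1,1,1,2)`. The curve is given by weighted
homogeneous coordinates `baseX`, `baseY`, `baseZ`, `baseW` that are polynomials in its parameter. -/
def baseX (s : R) : R := s * (s ^ 2 + 1) ^ 2 * (s ^ 2 - 1)

/-- The `y`-coordinate of the base curve, see `baseX`. -/
def baseY (s : R) : R := -s ^ 4

/-- The `z`-coordinate of the base curve, see `baseX`. -/
def baseZ (s : R) : R := s ^ 8 + 1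

/-- The `w`-coordinate, of weight `2`, of the base curve, see `baseX`. -/
def baseW (s : R) : R := s ^ 2 * (s ^ 2 + 1) * (s ^ 10 - 1)

lemma base_equation [CharP R 3] (s : R) :
    -baseW s ^ 2 = baseX s ^ 4 + baseY s ^ 3 * baseZ s - baseY s * baseZ s ^ 3 := by
  simp only [baseX, baseY, baseZ, baseW]
  grind

end BaseCurve

section GenericBasePoint

variable {R A : Type*} [CommRing R] [CommRing A] [Algebra R A] {s t : A}

lemma baseW_ne_zero [IsDomain A] (hst : AlgebraicIndependent R ![s, t]) : baseW s ≠ 0 := by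
  have := (algebraMap R A).domain_nontrivial
  have hs : s ≠ 0 := hst.ne_zero 0
  have h := aeval_ne_zero_of_eval_ne_zero hst 0
    (p := (.X 0 ^ 2 + 1) * (.X 0 ^ 10 - 1)) (by simp)
  simpa [baseW, mul_assoc, hs] using h

variable [Nontrivial A]

lemma baseZ_ne_zero (hst : AlgebraicIndependent R ![s, t]) : baseZ s ≠ 0 := by
  have := (algebraMap R A).domain_nontrivial
  have h := aeval_ne_zero_of_eval_ne_zero hst 0 (p := baseZ (.X 0)) (by simp [baseZ])
  simpa [baseZ] using h

lemma baseZ_pow_add_baseW_pow_ne_zero (hst : AlgebraicIndependent R ![s, t]) :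
    baseZ s ^ 8 + baseW s ^ 4 ≠ 0 := by
  have := (algebraMap R A).domain_nontrivial
  have h := aeval_ne_zero_of_eval_ne_zero hst 0
    (p := baseZ (.X 0) ^ 8 + baseW (.X 0) ^ 4) (by simp [baseZ, baseW])
  simpa [baseZ, baseW] using h

lemma baseW_pow_mul_add_baseZ_pow_ne_zero (hst : AlgebraicIndependent R ![s, t]) :
    baseW s ^ 2 * t ^ 4 + baseZ s ^ 4 ≠ 0 := by
  have := (algebraMap R A).domain_nontrivial
  have h := aeval_ne_zero_of_eval_ne_zero hst 0
    (p := baseW (.X 0) ^ 2 * .X 1 ^ 4 + baseZ (.X 0) ^ 4) (by simp [baseZ, baseW])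
  simpa [baseZ, baseW] using h

end GenericBasePoint

section ResidualPoint

/-- For a point `(x, y, w)` of `−ω² = u⁴ + v³ − v` in characteristic `3` and the line of slope
`x³ − w²t` through `(x, y)`, this says that `l` is the increment of `u` from `x` to the residual
zero of `ω − w(1 − tl)²`. The equation has its denominator cleared, and `y` drops out of it. -/
def IsResidualShift {R : Type*} [CommRing R] (x w t l : R) : Prop :=
  l * (w ^ 2 * t ^ 4 + 1) = w ^ 2 * (1 + w ^ 4) * t ^ 3 - (x + x ^ 9)

lemma IsResidualShift.equation {R : Type*} [CommRing R] [CharP R 3] {x y w t l : R}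
    (hl : IsResidualShift x w t l) (h : -w ^ 2 = x ^ 4 + y ^ 3 - y) :
    -(w * (1 - t * l) ^ 2) ^ 2 =
      (x + l) ^ 4 + (y + l * (x ^ 3 - w ^ 2 * t)) ^ 3 - (y + l * (x ^ 3 - w ^ 2 * t)) := by
  have three_eq_zero : (3 : R) = 0 := CharP.ofNat_eq_zero R 3
  let slope := x ^ 3 - w ^ 2 * t
  unfold IsResidualShift at hl
  linear_combination h - l ^ 3 * hl +
    (l ^ 3 * (w ^ 2 * t ^ 3 - x + x ^ 3 * w ^ 2 * t * slope)
      - l ^ 2 * (2 * w ^ 2 * t ^ 2 + 2 * x ^ 2 + y * slope ^ 2)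
      - l * (1 + y ^ 2) * slope) * three_eq_zero

open Polynomial in
lemma IsResidualShift.isAlgebraic {A B : Type*} [CommRing A] [IsDomain A] [CommRing B]
    [IsDomain B] [Algebra A B] {x w t l : B} (hl : IsResidualShift x w t l) (hx : IsAlgebraic A x)
    (hw : IsAlgebraic A w) (hlA : IsAlgebraic A l) (hw₀ : w ≠ 0) (hw₁ : 1 + w ^ 4 ≠ 0) :
    IsAlgebraic A t := by
  let L := Subalgebra.algebraicClosure A B
  lift x to L using hx
  lift w to L using hw
  lift l to L using hlA
  norm_cast at hw₀ hw₁
  let p : L[X] := C (l * w ^ 2) * X ^ 4 - C (w ^ 2 * (1 + w ^ 4)) * X ^ 3 + C (l + x + x ^ 9)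
  have coeff_three : p.coeff 3 = -(w ^ 2 * (1 + w ^ 4)) := by
    simp only [p, coeff_add, coeff_sub, coeff_C_mul, coeff_X_pow, coeff_C]
    simp
  suffices IsAlgebraic L t from this.restrictScalars A
  refine ⟨p, fun hp ↦ ?_, ?_⟩
  · rw [hp, coeff_zero, eq_comm, neg_eq_zero] at coeff_three
    exact mul_ne_zero (pow_ne_zero 2 hw₀) hw₁ coeff_three
  · simp only [p, map_add, map_sub, map_mul, map_pow, map_one, aeval_X, aeval_C,
      Subalgebra.algebraMap_def]
    unfold IsResidualShift at hl
    linear_combination hl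

end ResidualPoint

section Eliminant

variable {R : Type*} [CommRing R]

/-- The result of eliminating `t` between the equation of `IsResidualShift` over the base curve and
the equation of the line joining the base point with parameter `s` to `(u, v)`, with the powers of
`baseZ s` and `baseW s` in the denominators cleared. -/
def eliminant (u v s : R) : R :=
  let X := baseX s
  let Z := baseZ s
  let W := baseW s
  let l := u * Z - X
  let m := l * X ^ 3 - (v * Z - baseY s) * Z ^ 3
  Z ^ 8 * (W ^ 6 * l ^ 4 + m ^ 4) + W ^ 6 * l ^ 3 * X * (Z ^ 8 + X ^ 8)
    - W ^ 2 * (Z ^ 8 + W ^ 4) * m ^ 3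

lemma map_eliminant {S F : Type*} [CommRing S] [FunLike F R S] [RingHomClass F R S]
    (f : F) (u v s : R) : f (eliminant u v s) = eliminant (f u) (f v) (f s) := by
  simp [eliminant, baseX, baseY, baseZ, baseW]

lemma eliminant_zero_right (u v : R) : eliminant u v 0 = v ^ 4 := by
  simp only [eliminant, baseX, baseY, baseZ, baseW]
  ring

lemma eliminant_one_right [CharP R 3] (u v : R) : eliminant u v 1 = (v - 1) ^ 4 := by
  simp only [eliminant, baseX, baseY, baseZ, baseW]
  grind

lemma eliminant_eq_zero {K : Type*} [Field K] {s t l : K} (hz : baseZ s ≠ 0)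
    (hl : IsResidualShift (baseX s / baseZ s) (baseW s / baseZ s ^ 2) t l) :
    eliminant (baseX s / baseZ s + l) (baseY s / baseZ s +
      l * ((baseX s / baseZ s) ^ 3 - (baseW s / baseZ s ^ 2) ^ 2 * t)) s = 0 := by
  unfold IsResidualShift at hl
  unfold eliminant
  generalize baseX s = X at *
  generalize baseY s = Y at *
  generalize baseZ s = Z at *
  generalize baseW s = W at *
  obtain ⟨x, rfl⟩ : ∃ x, X = x * Z := ⟨X / Z, by field_simp⟩
  obtain ⟨y, rfl⟩ : ∃ y, Y = y * Z := ⟨Y / Z, by field_simp⟩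
  obtain ⟨w, rfl⟩ : ∃ w, W = w * Z ^ 2 := ⟨W / Z ^ 2, by field_simp⟩
  simp only [mul_div_cancel_right₀, hz, ne_eq, pow_eq_zero_iff, not_false_eq_true,
    OfNat.ofNat_ne_zero] at *
  linear_combination Z ^ 24 * w ^ 6 * l ^ 3 * hl

open Polynomial in
lemma isAlgebraic_of_eliminant_eq_zero {A B : Type*} [CommRing A] [IsDomain A] [CharP A 3]
    [CommRing B] [Algebra A B] {u v : A} {s : B}
    (h : eliminant (algebraMap A B u) (algebraMap A B v) s = 0) : IsAlgebraic A s := by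
  refine ⟨eliminant (C u) (C v) X, fun hp ↦ ?_, by simpa [map_eliminant] using h⟩
  have eval_eq_zero (a : A) : eliminant u v a = 0 := by
    simpa [map_eliminant] using congrArg (evalRingHom a) hp
  have hv : v = 0 := by simpa [eliminant_zero_right] using eval_eq_zero 0
  have hv' : v - 1 = 0 := by simpa [eliminant_one_right] using eval_eq_zero 1
  simp [hv] at hv'

end Eliminant

section Parametrization

variable {R K : Type*} [CommRing R] [Field K] [Algebra R K] [CharP K 3]

lemma IsResidualShift.algebraicIndependent {s t l : K} (hst : AlgebraicIndependent R ![s, t])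
    (hl : IsResidualShift (baseX s / baseZ s) (baseW s / baseZ s ^ 2) t l) :
    AlgebraicIndependent R ![baseX s / baseZ s + l, baseY s / baseZ s +
      l * ((baseX s / baseZ s) ^ 3 - (baseW s / baseZ s ^ 2) ^ 2 * t)] := by
  have hz := baseZ_ne_zero hst
  have eliminant_uv := eliminant_eq_zero hz hl
  set x := baseX s / baseZ s with x_def
  set w := baseW s / baseZ s ^ 2 with w_def
  set u := x + l
  set v := baseY s / baseZ s + l * (x ^ 3 - w ^ 2 * t)
  let B := Algebra.adjoin R (Set.range ![u, v])
  have huB : u ∈ B := Algebra.subset_adjoin ⟨0, rfl⟩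
  have hvB : v ∈ B := Algebra.subset_adjoin ⟨1, rfl⟩
  have : CharP B 3 := (algebraMap B K).charP Subtype.val_injective 3
  have hs : IsAlgebraic B s :=
    isAlgebraic_of_eliminant_eq_zero (u := (⟨u, huB⟩ : B)) (v := ⟨v, hvB⟩) eliminant_uv
  let s' : Subalgebra.algebraicClosure B K := ⟨s, hs⟩
  have hx : IsAlgebraic B x := by
    rw [x_def, div_eq_mul_inv]
    exact .mul (baseX s').2 (.inv (baseZ s').2)
  have hw : IsAlgebraic B w := by
    rw [w_def, div_eq_mul_inv]
    exact .mul (baseW s').2 (.inv (.pow (baseZ s').2 2))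
  have hlB : IsAlgebraic B l := by
    rw [← add_sub_cancel_left x l]
    exact .sub (isAlgebraic_algebraMap (⟨u, huB⟩ : B)) hx
  have w_ne_zero : w ≠ 0 := div_ne_zero (baseW_ne_zero hst) (pow_ne_zero 2 hz)
  have one_add_w_ne_zero : 1 + w ^ 4 ≠ 0 := by
    rw [show 1 + w ^ 4 = (baseZ s ^ 8 + baseW s ^ 4) / baseZ s ^ 8 by rw [w_def]; field_simp]
    exact div_ne_zero (baseZ_pow_add_baseW_pow_ne_zero hst) (pow_ne_zero 8 hz)
  refine algebraicIndependent_of_isAlgebraic_adjoin hst fun i ↦ ?_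
  fin_cases i
  · exact hs
  · exact hl.isAlgebraic hx hw hlB w_ne_zero one_add_w_ne_zero

theorem X2_unirational_general {g : Fin 2 → K} (hg : AlgebraicIndependent R g) :
    ∃ u v ω : K, AlgebraicIndependent R ![u, v] ∧ -ω ^ 2 = u ^ 4 + v ^ 3 - v := by
  obtain ⟨s, t, rfl⟩ : ∃ s t, g = ![s, t] := ⟨g 0, g 1, (FinVec.etaExpand_eq g).symm⟩
  have hz := baseZ_ne_zero hg
  have base_affine : -(baseW s / baseZ s ^ 2) ^ 2 =
      (baseX s / baseZ s) ^ 4 + (baseY s / baseZ s) ^ 3 - baseY s / baseZ s := by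
    field_simp
    linear_combination base_equation s
  have denominator_ne_zero : (baseW s / baseZ s ^ 2) ^ 2 * t ^ 4 + 1 ≠ 0 := by
    rw [div_pow, div_mul_eq_mul_div, ← pow_mul, div_add_one (pow_ne_zero _ hz)]
    exact div_ne_zero (baseW_pow_mul_add_baseZ_pow_ne_zero hg) (pow_ne_zero 4 hz)
  have hl : IsResidualShift (baseX s / baseZ s) (baseW s / baseZ s ^ 2) t _ :=
    div_mul_cancel₀ _ denominator_ne_zero
  exact ⟨_, _, _, hl.algebraicIndependent hg, hl.equation base_affine⟩

end Parametrization

/-- Unirationality of the del Pezzo surface `X₂ : −w² = x⁴ + y³z − yz³` of degree 2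
over `F₃` (case `i = 2` of Theorem 3.3): there exist `u, v, ω` in the rational function
field `F₃(s,t)` with `u, v` algebraically independent over `F₃` and `−ω² = u⁴ + v³ − v`. -/
theorem X2_unirational :
    ∃ u v ω : FractionRing (MvPolynomial (Fin 2) (ZMod 3)),
      AlgebraicIndependent (ZMod 3) ![u, v] ∧
      -ω ^ 2 = u ^ 4 + v ^ 3 - v :=
  X2_unirational_general <| (MvPolynomial.algebraicIndependent_X (Fin 2) (ZMod 3)).map'
    (f := IsScalarTower.toAlgHom (ZMod 3) (MvPolynomial (Fin 2) (ZMod 3)) _)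
    (IsFractionRing.injective _ _)
end

section
/- Let k be a field and let f₀, f₁, f₂, g₀, g₁, g₂, g₃, g₄, w₀ ∈ k satisfy w₀² + f₀w₀ = g₀. Set δ = f₀ + 2w₀ and assume δ ≠ 0. Then there exists a unique pair (a, b) ∈ k² such that X³ divides the polynomial (aX² + bX + w₀)² + (f₂X² + f₁X + f₀)(aX² + bX + w₀) − (g₄X⁴ + g₃X³ + g₂X² + g₁X + g₀) in k[X]; explicitly, the unique pair is given by b = δ⁻¹(g₁ − w₀f₁) and a = δ⁻¹(g₂ − w₀f₂ − b² − f₁b). -/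
open Polynomial

/-!
Restricted to a section `w = q(x)`, the equation of the curve becomes the polynomial `q² + fq - g`,
and `X³` divides it exactly when its first three coefficients vanish. The constant one says that the
section passes through the chosen point. The next two determine the coefficients `q₁` and `q₂`
in turn, as in Hensel lifting: each equation is linear in its new unknown, with leading coefficient
the derivative `δ = f₀ + 2w₀` of `w² + f₀w` at `w₀`.
-/

theorem X_pow_three_dvd_iff {R : Type*} [Semiring R] {p : R[X]} :
    X ^ 3 ∣ p ↔ p.coeff 0 = 0 ∧ p.coeff 1 = 0 ∧ p.coeff 2 = 0 := by
  simp only [X_pow_dvd_iff, Nat.forall_lt_succ_right, Nat.not_lt_zero, IsEmpty.forall_iff,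
    implies_true, true_and, and_assoc]

section Tangency

variable {R : Type*} [CommRing R]

/-- The equation `w² + fw = g` of the curve restricted to the section `w = q(x)`, in the affine
chart `y = 1`. Its order of vanishing at `0` is the intersection multiplicity of the section with
the curve over `x = 0`. -/
noncomputable def sectionEquation (f g q : R[X]) : R[X] :=
  q ^ 2 + f * q - g

theorem coeff_zero_sectionEquation (f g q : R[X]) :
    (sectionEquation f g q).coeff 0 =
      q.coeff 0 ^ 2 + f.coeff 0 * q.coeff 0 - g.coeff 0 := by
  simp only [sectionEquation, sq, coeff_sub, coeff_add, mul_coeff_zero]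

theorem coeff_one_sectionEquation (f g q : R[X]) :
    (sectionEquation f g q).coeff 1 =
      (f.coeff 0 + 2 * q.coeff 0) * q.coeff 1 - (g.coeff 1 - q.coeff 0 * f.coeff 1) := by
  simp only [sectionEquation, sq, coeff_sub, coeff_add, mul_coeff_one]
  ring

theorem coeff_two_sectionEquation (f g q : R[X]) :
    (sectionEquation f g q).coeff 2 =
      (f.coeff 0 + 2 * q.coeff 0) * q.coeff 2 -
        (g.coeff 2 - q.coeff 0 * f.coeff 2 - q.coeff 1 ^ 2 - f.coeff 1 * q.coeff 1) := by
  simp only [sectionEquation, sq, coeff_sub, coeff_add, coeff_mul,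
    Finset.Nat.sum_antidiagonal_eq_sum_range_succ_mk, Finset.sum_range_succ,
    Finset.sum_range_zero]
  ring

theorem X_pow_three_dvd_sectionEquation_iff {f g q : R[X]}
    (hq : q.coeff 0 ^ 2 + f.coeff 0 * q.coeff 0 = g.coeff 0) :
    X ^ 3 ∣ sectionEquation f g q ↔
      (f.coeff 0 + 2 * q.coeff 0) * q.coeff 1 = g.coeff 1 - q.coeff 0 * f.coeff 1 ∧
      (f.coeff 0 + 2 * q.coeff 0) * q.coeff 2 =
        g.coeff 2 - q.coeff 0 * f.coeff 2 - q.coeff 1 ^ 2 - f.coeff 1 * q.coeff 1 := by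
  rw [X_pow_three_dvd_iff, coeff_zero_sectionEquation, coeff_one_sectionEquation,
    coeff_two_sectionEquation, sub_eq_zero, sub_eq_zero, sub_eq_zero, and_iff_right hq]

theorem unique_tangent_section_coefficients_general {f g q : R[X]}
    (hq : q.coeff 0 ^ 2 + f.coeff 0 * q.coeff 0 = g.coeff 0)
    (δ : Rˣ) (hδ : (δ : R) = f.coeff 0 + 2 * q.coeff 0) {a b : R}
    (hb : b = ↑δ⁻¹ * (g.coeff 1 - q.coeff 0 * f.coeff 1))
    (ha : a = ↑δ⁻¹ * (g.coeff 2 - q.coeff 0 * f.coeff 2 - b ^ 2 - f.coeff 1 * b)) :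
    X ^ 3 ∣ sectionEquation f g q ↔ q.coeff 2 = a ∧ q.coeff 1 = b := by
  rw [X_pow_three_dvd_sectionEquation_iff hq, ← hδ, ← Units.eq_inv_mul_iff_mul_eq,
    ← Units.eq_inv_mul_iff_mul_eq, ← hb, and_comm]
  refine and_congr_left fun hqb => ?_
  rw [hqb, ← ha]

end Tangency

/-- The algebraic core of Lemma 4.4 and Remark 4.6: given `w₀² + f₀w₀ = g₀` and
`δ = f₀ + 2w₀ ≠ 0`, there is a unique pair `(a, b) ∈ k²` such that `X³` divides
`(aX² + bX + w₀)² + (f₂X² + f₁X + f₀)(aX² + bX + w₀) − (g₄X⁴ + g₃X³ + g₂X² + g₁X + g₀)`,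
and it is given explicitly by `b = δ⁻¹(g₁ − w₀f₁)`, `a = δ⁻¹(g₂ − w₀f₂ − b² − f₁b)`. -/
theorem unique_tangent_section_coefficients
    (k : Type*) [Field k] (f₀ f₁ f₂ g₀ g₁ g₂ g₃ g₄ w₀ : k)
    (hw : w₀ ^ 2 + f₀ * w₀ = g₀)
    (δ : k) (hδdef : δ = f₀ + 2 * w₀) (hδ : δ ≠ 0)
    (P : k → k → Polynomial k)
    (hP : ∀ a b : k, P a b =
      (C a * X ^ 2 + C b * X + C w₀) ^ 2
        + (C f₂ * X ^ 2 + C f₁ * X + C f₀) * (C a * X ^ 2 + C b * X + C w₀)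
        - (C g₄ * X ^ 4 + C g₃ * X ^ 3 + C g₂ * X ^ 2 + C g₁ * X + C g₀))
    (b a : k)
    (hb : b = δ⁻¹ * (g₁ - w₀ * f₁))
    (ha : a = δ⁻¹ * (g₂ - w₀ * f₂ - b ^ 2 - f₁ * b)) :
    (X ^ 3 ∣ P a b) ∧ ∀ a' b' : k, X ^ 3 ∣ P a' b' → a' = a ∧ b' = b := by
  have tangent_iff (a' b' : k) : X ^ 3 ∣ P a' b' ↔ a' = a ∧ b' = b := by
    rw [hP]
    exact (unique_tangent_section_coefficients_general (by simpa using hw) (Units.mk0 δ hδ)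
      (by simpa using hδdef) (by simpa [coeff_X] using hb) (by simpa [coeff_X] using ha)).trans
      (by simp)
  exact ⟨(tangent_iff a b).2 ⟨rfl, rfl⟩, fun a' b' => (tangent_iff a' b').1⟩
end

section
/- Let k be a field and let f₀, g₀, w₀ ∈ k satisfy w₀² + f₀w₀ = g₀; set δ = f₀ + 2w₀ and assume δ ≠ 0. Let f₁, g₁ ∈ k[x,y] be homogeneous of degree 1 and f₂, g₂ ∈ k[x,y] homogeneous of degree 2, and set b = δ⁻¹(g₁ − w₀f₁), a = δ⁻¹(g₂ − w₀f₂ − b² − f₁b) in k[x,y], and f = f₂ + f₁z + f₀z² ∈ k[x,y,z]. Then δ³·(a + b·z + w₀·z²) = δ²·(g₂ + g₁z + 2g₀z² − w₀f) − g₁² + f₁·(g₀f₁ − f₀g₁) in k[x,y,z]. -/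
open MvPolynomial

/-!
Put `δ = f₀ + 2w₀`. After substituting `w = a + bz + w₀z²` into `w² + fw - g`, the coefficients of
`z⁴`, `z³` and `z²` vanish exactly when `w₀² + f₀w₀ = g₀`, `δb = g₁ - w₀f₁` and
`δa = g₂ - w₀f₂ - b² - f₁b`. So it suffices to compare coefficients of powers of `z`. Only the
constant one needs the full factor `δ³`, since `a` involves `δ⁻¹b²`; there the equation for `w₀`
turns `δ²(b² + f₁b) = (g₁ - w₀f₁)² + δf₁(g₁ - w₀f₁)` into `g₁² - f₁(g₀f₁ - f₀g₁)`.
-/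

section

variable {R A : Type*} [CommRing R] [CommRing A] [Algebra R A]
  {f₀ g₀ w₀ δ : R} {f₁ g₁ f₂ g₂ a b : A}

theorem delta_mul_quadraticCoeff (hw : w₀ ^ 2 + f₀ * w₀ = g₀) (hδ : δ = f₀ + 2 * w₀) :
    δ * w₀ = 2 * g₀ - w₀ * f₀ := by
  rw [hδ, ← hw]
  ring

theorem delta_sq_smul_sq_add_mul (hw : w₀ ^ 2 + f₀ * w₀ = g₀) (hδ : δ = f₀ + 2 * w₀)
    (hb : δ • b = g₁ - w₀ • f₁) :
    δ ^ 2 • (b ^ 2 + f₁ * b) = g₁ ^ 2 - f₁ * (g₀ • f₁ - f₀ • g₁) := by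
  calc
    δ ^ 2 • (b ^ 2 + f₁ * b) = (δ • b) ^ 2 + δ • (f₁ * (δ • b)) := by
      rw [smul_add, smul_pow, pow_two δ, mul_smul _ _ (f₁ * b), mul_smul_comm]
    _ = (g₁ - w₀ • f₁) ^ 2 + δ • (f₁ * (g₁ - w₀ • f₁)) := by rw [hb]
    _ = g₁ ^ 2 - f₁ * (g₀ • f₁ - f₀ • g₁) := by
      simp only [hδ, ← hw, Algebra.smul_def, map_add, map_mul, map_pow, map_ofNat]
      ring

theorem delta_cube_smul_constCoeff (hw : w₀ ^ 2 + f₀ * w₀ = g₀) (hδ : δ = f₀ + 2 * w₀)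
    (hb : δ • b = g₁ - w₀ • f₁) (ha : δ • a = g₂ - w₀ • f₂ - b ^ 2 - f₁ * b) :
    δ ^ 3 • a = δ ^ 2 • (g₂ - w₀ • f₂) - g₁ ^ 2 + f₁ * (g₀ • f₁ - f₀ • g₁) := by
  calc
    δ ^ 3 • a = δ ^ 2 • (δ • a) := by rw [smul_smul, ← pow_succ]
    _ = δ ^ 2 • (g₂ - w₀ • f₂) - δ ^ 2 • (b ^ 2 + f₁ * b) := by
      rw [ha, sub_sub _ (b ^ 2), smul_sub]
    _ = δ ^ 2 • (g₂ - w₀ • f₂) - g₁ ^ 2 + f₁ * (g₀ • f₁ - f₀ • g₁) := by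
      rw [delta_sq_smul_sq_add_mul hw hδ hb, sub_add]

theorem manin_section_explicit_formula_general {B : Type*} [CommRing B] [Algebra R B]
    (φ : A →ₐ[R] B) (z : B) (hw : w₀ ^ 2 + f₀ * w₀ = g₀) (hδ : δ = f₀ + 2 * w₀)
    (hb : δ • b = g₁ - w₀ • f₁) (ha : δ • a = g₂ - w₀ • f₂ - b ^ 2 - f₁ * b)
    {f : B} (hf : f = φ f₂ + φ f₁ * z + f₀ • z ^ 2) :
    δ ^ 3 • (φ a + φ b * z + w₀ • z ^ 2)
      = δ ^ 2 • (φ g₂ + φ g₁ * z + (2 * g₀) • z ^ 2 - w₀ • f)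
        - φ g₁ ^ 2 + φ f₁ * (g₀ • φ f₁ - f₀ • φ g₁) := by
  have h_const : δ ^ 3 • φ a
      = δ ^ 2 • (φ g₂ - w₀ • φ f₂) - φ g₁ ^ 2 + φ f₁ * (g₀ • φ f₁ - f₀ • φ g₁) := by
    simpa only [map_smul, map_add, map_sub, map_mul, map_pow]
      using congrArg φ (delta_cube_smul_constCoeff hw hδ hb ha)
  have h_linear : δ • φ b = φ g₁ - w₀ • φ f₁ := by
    simpa only [map_smul, map_sub] using congrArg φ hb
  have h_quadratic : δ • w₀ • z ^ 2 = (2 * g₀ - w₀ * f₀) • z ^ 2 := by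
    rw [smul_smul, delta_mul_quadraticCoeff hw hδ]
  calc
    δ ^ 3 • (φ a + φ b * z + w₀ • z ^ 2)
        = δ ^ 3 • φ a + δ ^ 2 • ((δ • φ b) * z + δ • w₀ • z ^ 2) := by
      rw [add_assoc, smul_add, smul_mul_assoc, ← smul_add δ, smul_smul, ← pow_succ]
    _ = δ ^ 2 • (φ g₂ + φ g₁ * z + (2 * g₀) • z ^ 2 - w₀ • f)
        - φ g₁ ^ 2 + φ f₁ * (g₀ • φ f₁ - f₀ • φ g₁) := by
      rw [h_const, h_linear, h_quadratic, hf]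
      simp only [Algebra.smul_def, map_sub, map_mul]
      ring

end

/-- The identity of Remark 4.10 (the equality `ξ = ξ'`): with `δ = f₀ + 2w₀ ≠ 0`,
`w₀² + f₀w₀ = g₀`, `b = δ⁻¹(g₁ − w₀f₁)`, `a = δ⁻¹(g₂ − w₀f₂ − b² − f₁b)` in `k[x,y]`
and `f = f₂ + f₁z + f₀z²` in `k[x,y,z]`, one has
`δ³(a + bz + w₀z²) = δ²(g₂ + g₁z + 2g₀z² − w₀f) − g₁² + f₁(g₀f₁ − f₀g₁)`.
Here `k[x,y]` is embedded in `k[x,y,z]` via `rename Fin.castSucc`. -/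
theorem manin_section_explicit_formula
    (k : Type*) [Field k] (f₀ g₀ w₀ : k)
    (hw : w₀ ^ 2 + f₀ * w₀ = g₀)
    (δ : k) (hδdef : δ = f₀ + 2 * w₀) (hδ : δ ≠ 0)
    (f₁ g₁ f₂ g₂ : MvPolynomial (Fin 2) k)
    (hf₁ : f₁.IsHomogeneous 1) (hg₁ : g₁.IsHomogeneous 1)
    (hf₂ : f₂.IsHomogeneous 2) (hg₂ : g₂.IsHomogeneous 2)
    (b a : MvPolynomial (Fin 2) k)
    (hb : b = C δ⁻¹ * (g₁ - C w₀ * f₁))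
    (ha : a = C δ⁻¹ * (g₂ - C w₀ * f₂ - b ^ 2 - f₁ * b))
    (f : MvPolynomial (Fin 3) k)
    (hf : f = rename Fin.castSucc f₂ + rename Fin.castSucc f₁ * X 2 + C f₀ * X 2 ^ 2) :
    C (δ ^ 3) * (rename Fin.castSucc a + rename Fin.castSucc b * X 2 + C w₀ * X 2 ^ 2)
      = C (δ ^ 2) * (rename Fin.castSucc g₂ + rename Fin.castSucc g₁ * X 2
          + C (2 * g₀) * X 2 ^ 2 - C w₀ * f)
        - (rename Fin.castSucc g₁) ^ 2
        + rename Fin.castSucc f₁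
          * (C g₀ * rename Fin.castSucc f₁ - C f₀ * rename Fin.castSucc g₁) := by
  simp only [C_mul', eq_inv_smul_iff₀ hδ] at hb ha hf ⊢
  exact manin_section_explicit_formula_general (rename Fin.castSucc) (X 2) hw hδdef hb ha hf
end

section
/- Let k be a field, let f₁, g₁ ∈ k[x,y] be homogeneous of degree 1, f₂, g₂ homogeneous of degree 2, g₃ homogeneous of degree 3, g₄ homogeneous of degree 4, and let f₀, g₀, w₀ ∈ k satisfy w₀² + f₀w₀ = g₀ with δ := f₀ + 2w₀ ≠ 0. Set f = f₂ + f₁z + f₀z² and g = g₄ + g₃z + g₂z² + g₁z³ + g₀z⁴ in k[x,y,z], and define W = δ²(g₂ + g₁z + 2g₀z² − w₀f) − g₁² + f₁(g₀f₁ − f₀g₁) and h = W² + δ³·f·W − δ⁶·g in k[x,y,z]. Write h = Σ_{i=0}^{4} h_i · z^{4−i} with h_i ∈ k[x,y] homogeneous of degree i. Then h₀ = h₁ = h₂ = 0; that is, the quartic plane curve h = 0 has a point of multiplicity at least 3 at Q = (0 : 0 : 1). -/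
/-!
Up to the factor `δ⁶`, the quartic `h` is the equation `w² + fw - g` of the surface evaluated at
`w = W / δ³`. On the chart `z = 1` the surface is étale over the plane at `P`, since the derivative
of `w² + fw - g` in `w` is `δ` there, and `W / δ³` is the second-order Taylor polynomial in `(x, y)`
of the branch `w = w(x, y)` through `P`. Substituting it leaves only terms of order at least 3.
-/

open MvPolynomial

section Ring

variable {A : Type*} [CommRing A] {I : Ideal A}

theorem sq_add_mul_sub_mem_pow_three {u₀ u₁ u₂ b₀ b₁ b₂ c₀ c₁ c₂ c₃ : A}
    (hu₁ : u₁ ∈ I) (hu₂ : u₂ ∈ I ^ 2) (hb₁ : b₁ ∈ I) (hb₂ : b₂ ∈ I ^ 2) (hc₃ : c₃ ∈ I ^ 3)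
    (order_zero : u₀ ^ 2 + b₀ * u₀ = c₀)
    (order_one : (2 * u₀ + b₀) * u₁ + b₁ * u₀ = c₁)
    (order_two : (2 * u₀ + b₀) * u₂ + b₂ * u₀ + u₁ ^ 2 + b₁ * u₁ = c₂) :
    (u₀ + u₁ + u₂) ^ 2 + (b₀ + b₁ + b₂) * (u₀ + u₁ + u₂) - (c₀ + c₁ + c₂ + c₃) ∈ I ^ 3 := by
  have tail : (2 * u₁ + u₂ + b₁) * u₂ + u₁ * b₂ + u₂ * b₂ - c₃ ∈ I ^ 3 := by
    have hu₂I : u₂ ∈ I := Ideal.pow_le_self two_ne_zero hu₂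
    have mul_mem {p q : A} (hp : p ∈ I) (hq : q ∈ I ^ 2) : p * q ∈ I ^ 3 :=
      pow_succ' I 2 ▸ Ideal.mul_mem_mul hp hq
    have hlin : 2 * u₁ + u₂ + b₁ ∈ I := add_mem (add_mem (I.mul_mem_left 2 hu₁) hu₂I) hb₁
    exact sub_mem (add_mem (add_mem (mul_mem hlin hu₂) (mul_mem hu₁ hb₂)) (mul_mem hu₂I hb₂)) hc₃
  convert tail using 1
  linear_combination order_zero + order_one + order_two

theorem manin_numerator_eq_taylor {f₀ g₀ w₀ δ : A} (hw : w₀ ^ 2 + f₀ * w₀ = g₀)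
    (hδ : δ = f₀ + 2 * w₀) (F₁ F₂ G₁ G₂ z : A) :
    δ ^ 2 * (G₂ + G₁ * z + 2 * g₀ * z ^ 2 - w₀ * (F₂ + F₁ * z + f₀ * z ^ 2)) - G₁ ^ 2
        + F₁ * (g₀ * F₁ - f₀ * G₁)
      = δ ^ 3 * w₀ * z ^ 2 + δ ^ 2 * (G₁ - w₀ * F₁) * z
        + (δ ^ 2 * (G₂ - w₀ * F₂) - (G₁ - w₀ * F₁) ^ 2 - δ * F₁ * (G₁ - w₀ * F₁)) := by
  subst hw hδ
  ring

theorem manin_quartic_mem_pow_three {f₀ g₀ w₀ δ F₁ F₂ G₁ G₂ G₃ G₄ : A}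
    (hw : w₀ ^ 2 + f₀ * w₀ = g₀) (hδ : δ = f₀ + 2 * w₀)
    (hF₁ : F₁ ∈ I) (hF₂ : F₂ ∈ I ^ 2) (hG₁ : G₁ ∈ I) (hG₂ : G₂ ∈ I ^ 2)
    (hG₃ : G₃ ∈ I ^ 3) (hG₄ : G₄ ∈ I ^ 3) {z f g W : A}
    (hf : f = F₂ + F₁ * z + f₀ * z ^ 2)
    (hg : g = G₄ + G₃ * z + G₂ * z ^ 2 + G₁ * z ^ 3 + g₀ * z ^ 4)
    (hW : W = δ ^ 2 * (G₂ + G₁ * z + 2 * g₀ * z ^ 2 - w₀ * f) - G₁ ^ 2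
      + F₁ * (g₀ * F₁ - f₀ * G₁)) :
    W ^ 2 + δ ^ 3 * f * W - δ ^ 6 * g ∈ I ^ 3 := by
  rw [hf, manin_numerator_eq_taylor hw hδ] at hW
  -- `L / δ` and `Q / δ ^ 3` are the parts of order 1 and 2 of the Taylor polynomial `W / δ ^ 3`.
  set L := G₁ - w₀ * F₁ with hL
  set Q := δ ^ 2 * (G₂ - w₀ * F₂) - L ^ 2 - δ * F₁ * L with hQ
  have hL_mem : L ∈ I := sub_mem hG₁ (I.mul_mem_left _ hF₁)
  have hQ_mem : Q ∈ I ^ 2 := by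
    refine sub_mem (sub_mem ?_ (Ideal.pow_mem_pow hL_mem 2)) ?_
    · exact Ideal.mul_mem_left _ _ (sub_mem hG₂ (Ideal.mul_mem_left _ _ hF₂))
    · exact pow_two I ▸ Ideal.mul_mem_mul (I.mul_mem_left _ hF₁) hL_mem
  have order_zero : (δ ^ 3 * w₀ * z ^ 2) ^ 2 + δ ^ 3 * f₀ * z ^ 2 * (δ ^ 3 * w₀ * z ^ 2)
      = δ ^ 6 * g₀ * z ^ 4 := by
    linear_combination δ ^ 6 * z ^ 4 * hw
  have two_mul_add : 2 * (δ ^ 3 * w₀ * z ^ 2) + δ ^ 3 * f₀ * z ^ 2 = δ ^ 4 * z ^ 2 := by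
    linear_combination -δ ^ 3 * z ^ 2 * hδ
  have order_one : (2 * (δ ^ 3 * w₀ * z ^ 2) + δ ^ 3 * f₀ * z ^ 2) * (δ ^ 2 * L * z)
      + δ ^ 3 * F₁ * z * (δ ^ 3 * w₀ * z ^ 2) = δ ^ 6 * G₁ * z ^ 3 := by
    rw [two_mul_add, hL]
    ring
  have order_two : (2 * (δ ^ 3 * w₀ * z ^ 2) + δ ^ 3 * f₀ * z ^ 2) * Q
      + δ ^ 3 * F₂ * (δ ^ 3 * w₀ * z ^ 2) + (δ ^ 2 * L * z) ^ 2 + δ ^ 3 * F₁ * z * (δ ^ 2 * L * z)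
      = δ ^ 6 * G₂ * z ^ 2 := by
    rw [two_mul_add, hQ]
    ring
  have key := sq_add_mul_sub_mem_pow_three (I := I) (c₃ := δ ^ 6 * (G₃ * z + G₄))
    (I.mul_mem_right _ (I.mul_mem_left _ hL_mem)) hQ_mem
    (I.mul_mem_right _ (I.mul_mem_left _ hF₁)) (Ideal.mul_mem_left _ _ hF₂)
    (Ideal.mul_mem_left _ _ (add_mem (Ideal.mul_mem_right _ _ hG₃) hG₄))
    order_zero order_one order_two
  convert key using 1
  rw [hW, hf, hg]
  ring

end Ring

section MvPolynomial

variable {σ τ R : Type*} [CommSemiring R]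

theorem mem_idealOfVars_pow_of_isHomogeneous {p : MvPolynomial σ R} {n : ℕ}
    (hp : p.IsHomogeneous n) : p ∈ idealOfVars σ R ^ n :=
  (mem_pow_idealOfVars_iff' n p).mpr fun _ hm ↦ hp.coeff_eq_zero hm.ne

theorem rename_mem_map_idealOfVars_pow_of_isHomogeneous (e : σ → τ) {p : MvPolynomial σ R} {n : ℕ}
    (hp : p.IsHomogeneous n) : rename e p ∈ (idealOfVars σ R).map (rename (R := R) e) ^ n := by
  rw [← Ideal.map_pow]
  exact Ideal.mem_map_of_mem _ (mem_idealOfVars_pow_of_isHomogeneous hp)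

theorem coeff_eq_zero_of_mem_map_rename_idealOfVars_pow {e : σ → τ} (he : e.Injective)
    {p : MvPolynomial τ R} {n : ℕ} (hp : p ∈ (idealOfVars σ R).map (rename (R := R) e) ^ n)
    {m : τ →₀ ℕ} (hm : (m.comapDomain e he.injOn).degree < n) : coeff m p = 0 := by
  have map_eq_span : (idealOfVars σ R).map (rename (R := R) e) ^ n = Ideal.span
      ((monomial · 1) '' (Finsupp.mapDomain e '' (Finsupp.degree ⁻¹' {n}))) := by
    rw [← Ideal.map_pow, pow_idealOfVars_eq_span, Ideal.map_span]
    simp only [Set.image_image, rename_monomial]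
  rw [map_eq_span, mem_ideal_span_monomial_image] at hp
  by_contra hcoeff
  obtain ⟨_, ⟨u, hu, rfl⟩, hum⟩ := hp m (mem_support_iff.mpr hcoeff)
  have hle : u ≤ m.comapDomain e he.injOn := fun i ↦ by
    simpa only [Finsupp.mapDomain_apply he, Finsupp.comapDomain_apply] using hum (e i)
  exact hm.not_ge (hu ▸ Finsupp.degree_mono hle)

end MvPolynomial

theorem manin_quartic_has_triple_point_general {n : ℕ} {R : Type*} [CommRing R] {f₀ g₀ w₀ δ : R}
    (hw : w₀ ^ 2 + f₀ * w₀ = g₀) (hδ : δ = f₀ + 2 * w₀)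
    {f₁ g₁ f₂ g₂ g₃ g₄ : MvPolynomial (Fin n) R}
    (hf₁ : f₁.IsHomogeneous 1) (hg₁ : g₁.IsHomogeneous 1)
    (hf₂ : f₂.IsHomogeneous 2) (hg₂ : g₂.IsHomogeneous 2)
    (hg₃ : g₃.IsHomogeneous 3) (hg₄ : g₄.IsHomogeneous 4)
    {f g W h : MvPolynomial (Fin (n + 1)) R}
    (hf : f = rename Fin.castSucc f₂ + rename Fin.castSucc f₁ * X (Fin.last n)
      + C f₀ * X (Fin.last n) ^ 2)
    (hg : g = rename Fin.castSucc g₄ + rename Fin.castSucc g₃ * X (Fin.last n)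
      + rename Fin.castSucc g₂ * X (Fin.last n) ^ 2
      + rename Fin.castSucc g₁ * X (Fin.last n) ^ 3 + C g₀ * X (Fin.last n) ^ 4)
    (hW : W = C (δ ^ 2) * (rename Fin.castSucc g₂ + rename Fin.castSucc g₁ * X (Fin.last n)
        + C (2 * g₀) * X (Fin.last n) ^ 2 - C w₀ * f)
      - rename Fin.castSucc g₁ ^ 2
      + rename Fin.castSucc f₁
        * (C g₀ * rename Fin.castSucc f₁ - C f₀ * rename Fin.castSucc g₁))
    (hh : h = W ^ 2 + C (δ ^ 3) * f * W - C (δ ^ 6) * g)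
    (m : Fin (n + 1) →₀ ℕ) (hm : ∑ i : Fin n, m i.castSucc ≤ 2) : coeff m h = 0 := by
  have mem_pow {p : MvPolynomial (Fin n) R} {d : ℕ} (hp : p.IsHomogeneous d) :
      rename Fin.castSucc p ∈ (idealOfVars (Fin n) R).map (rename (R := R) Fin.castSucc) ^ d :=
    rename_mem_map_idealOfVars_pow_of_isHomogeneous Fin.castSucc hp
  have mem_of_linear {p : MvPolynomial (Fin n) R} (hp : p.IsHomogeneous 1) :
      rename Fin.castSucc p ∈ (idealOfVars (Fin n) R).map (rename (R := R) Fin.castSucc) := by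
    simpa only [pow_one] using mem_pow hp
  have hwC : C w₀ ^ 2 + C f₀ * C w₀ = (C g₀ : MvPolynomial (Fin (n + 1)) R) := by
    rw [← hw, map_add, map_pow, map_mul]
  have hδC : C δ = (C f₀ + 2 * C w₀ : MvPolynomial (Fin (n + 1)) R) := by
    rw [hδ, map_add, map_mul, map_ofNat]
  simp only [map_pow, map_mul, map_ofNat] at hW hh
  have h_mem : h ∈ (idealOfVars (Fin n) R).map (rename (R := R) Fin.castSucc) ^ 3 :=
    hh ▸ manin_quartic_mem_pow_three hwC hδC (mem_of_linear hf₁) (mem_pow hf₂)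
      (mem_of_linear hg₁) (mem_pow hg₂) (mem_pow hg₃)
      (Ideal.pow_le_pow_right (Nat.le_succ 3) (mem_pow hg₄)) hf hg hW
  refine coeff_eq_zero_of_mem_map_rename_idealOfVars_pow (Fin.castSucc_injective n) h_mem ?_
  simpa only [Finsupp.degree_eq_sum, Finsupp.comapDomain_apply] using Nat.lt_succ_of_le hm

/-- Explicit content of Propositions 4.9(4) and 4.14: for the del Pezzo surface
`w² + fw = g` with `f = f₂ + f₁z + f₀z²`, `g = g₄ + g₃z + g₂z² + g₁z³ + g₀z⁴`, a point
`P = (0:0:1:w₀)` off the ramification locus (`δ = f₀ + 2w₀ ≠ 0`), and Manin's surface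
`Y : δ³w = W` with `W = δ²(g₂ + g₁z + 2g₀z² − w₀f) − g₁² + f₁(g₀f₁ − f₀g₁)`, the plane
quartic `h = W² + δ³fW − δ⁶g` has a point of multiplicity at least 3 at `Q = (0:0:1)`:
writing `h = Σ hᵢ z^{4−i}` with `hᵢ ∈ k[x,y]` homogeneous of degree `i`, one has
`h₀ = h₁ = h₂ = 0`, i.e. every monomial of `h` of `(x,y)`-degree at most 2 has zero
coefficient. -/
theorem manin_quartic_has_triple_point
    (k : Type*) [Field k] (f₀ g₀ w₀ : k)
    (hw : w₀ ^ 2 + f₀ * w₀ = g₀)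
    (δ : k) (hδdef : δ = f₀ + 2 * w₀) (hδ : δ ≠ 0)
    (f₁ g₁ f₂ g₂ g₃ g₄ : MvPolynomial (Fin 2) k)
    (hf₁ : f₁.IsHomogeneous 1) (hg₁ : g₁.IsHomogeneous 1)
    (hf₂ : f₂.IsHomogeneous 2) (hg₂ : g₂.IsHomogeneous 2)
    (hg₃ : g₃.IsHomogeneous 3) (hg₄ : g₄.IsHomogeneous 4)
    (f g : MvPolynomial (Fin 3) k)
    (hf : f = rename Fin.castSucc f₂ + rename Fin.castSucc f₁ * X 2 + C f₀ * X 2 ^ 2)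
    (hg : g = rename Fin.castSucc g₄ + rename Fin.castSucc g₃ * X 2
        + rename Fin.castSucc g₂ * X 2 ^ 2 + rename Fin.castSucc g₁ * X 2 ^ 3
        + C g₀ * X 2 ^ 4)
    (W : MvPolynomial (Fin 3) k)
    (hW : W = C (δ ^ 2) * (rename Fin.castSucc g₂ + rename Fin.castSucc g₁ * X 2
          + C (2 * g₀) * X 2 ^ 2 - C w₀ * f)
        - (rename Fin.castSucc g₁) ^ 2
        + rename Fin.castSucc f₁
          * (C g₀ * rename Fin.castSucc f₁ - C f₀ * rename Fin.castSucc g₁))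
    (h : MvPolynomial (Fin 3) k)
    (hh : h = W ^ 2 + C (δ ^ 3) * f * W - C (δ ^ 6) * g) :
    ∀ m : Fin 3 →₀ ℕ, m 0 + m 1 ≤ 2 → coeff m h = 0 := by
  intro m hm
  exact manin_quartic_has_triple_point_general hw hδdef hf₁ hg₁ hf₂ hg₂ hg₃ hg₄ hf hg hW hh m
    (by rwa [Fin.sum_univ_two])
end

section
/- Let K be an algebraically closed field of characteristic 3 and let F = w² + (x² + y²)² + y³z − yz³ ∈ K[x,y,z,w]. Then there is no point (x₀,y₀,z₀,w₀) ∈ K⁴ with (x₀,y₀,z₀) ≠ (0,0,0) at which F and all four partial derivatives ∂F/∂x, ∂F/∂y, ∂F/∂z, ∂F/∂w vanish simultaneously. -/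
open MvPolynomial

/-!
In characteristic 3 the form `y³z − yz³` has partial derivatives `−z³` in `y` and `y³` in `z`, so
the equations `∇F = 0` are triangular: `∂F/∂z = y³` gives `y = 0`, then `∂F/∂y = −z³` gives
`z = 0` and `∂F/∂x = 4x³ = x³` gives `x = 0`, while `∂F/∂w = 2w` gives `w = 0`.
-/

/-- The weighted homogeneous equation `w² + (x² + y²)² + y³z − yz³` of the surface `X₁` in
`P(1,1,1,2)`, over an arbitrary coefficient ring; the coordinates `x, y, z, w` are the variables
`0, 1, 2, 3`. -/
noncomputable def x1Equation (R : Type*) [CommRing R] : MvPolynomial (Fin 4) R :=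
  X 3 ^ 2 + (X 0 ^ 2 + X 1 ^ 2) ^ 2 + X 1 ^ 3 * X 2 - X 1 * X 2 ^ 3

section Gradient

variable {R : Type*} [CommRing R]

theorem derivation_x1Equation {M : Type*} [AddCommGroup M] [Module R M]
    [Module (MvPolynomial (Fin 4) R) M] (D : Derivation R (MvPolynomial (Fin 4) R) M) :
    D (x1Equation R) =
      (4 * X 0 * (X 0 ^ 2 + X 1 ^ 2) : MvPolynomial (Fin 4) R) • D (X 0) +
      (4 * X 1 * (X 0 ^ 2 + X 1 ^ 2) + 3 * X 1 ^ 2 * X 2 - X 2 ^ 3 : MvPolynomial (Fin 4) R) •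
        D (X 1) +
      (X 1 ^ 3 - 3 * X 1 * X 2 ^ 2 : MvPolynomial (Fin 4) R) • D (X 2) +
      (2 * X 3 : MvPolynomial (Fin 4) R) • D (X 3) := by
  simp only [x1Equation, map_add, map_sub, Derivation.leibniz, Derivation.leibniz_pow]
  module

theorem pderiv_zero_x1Equation :
    pderiv 0 (x1Equation R) = 4 * X 0 * (X 0 ^ 2 + X 1 ^ 2) := by
  simp [derivation_x1Equation]

theorem pderiv_one_x1Equation :
    pderiv 1 (x1Equation R) = 4 * X 1 * (X 0 ^ 2 + X 1 ^ 2) + 3 * X 1 ^ 2 * X 2 - X 2 ^ 3 := by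
  simp [derivation_x1Equation]

theorem pderiv_two_x1Equation :
    pderiv 2 (x1Equation R) = X 1 ^ 3 - 3 * X 1 * X 2 ^ 2 := by
  simp [derivation_x1Equation]

theorem pderiv_three_x1Equation :
    pderiv 3 (x1Equation R) = 2 * X 3 := by
  simp [derivation_x1Equation]

end Gradient

theorem X1_smooth_general {R : Type*} [CommRing R] [IsReduced R] [CharP R 3] {P : Fin 4 → R}
    (hP : ∀ i, eval P (pderiv i (x1Equation R)) = 0) : P = 0 := by
  have three_eq_zero : (3 : R) = 0 := CharP.ofNat_eq_zero R 3
  have hx : 4 * P 0 * (P 0 ^ 2 + P 1 ^ 2) = 0 := by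
    simpa [pderiv_zero_x1Equation] using hP 0
  have hy : 4 * P 1 * (P 0 ^ 2 + P 1 ^ 2) + 3 * P 1 ^ 2 * P 2 - P 2 ^ 3 = 0 := by
    simpa [pderiv_one_x1Equation] using hP 1
  have hz : P 1 ^ 3 - 3 * P 1 * P 2 ^ 2 = 0 := by
    simpa [pderiv_two_x1Equation] using hP 2
  have hw : 2 * P 3 = 0 := by
    simpa [pderiv_three_x1Equation] using hP 3
  have y_eq_zero : P 1 = 0 := by
    refine eq_zero_of_pow_eq_zero (n := 3) ?_
    linear_combination hz + P 1 * P 2 ^ 2 * three_eq_zero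
  rw [y_eq_zero] at hx hy
  have z_eq_zero : P 2 = 0 := by
    refine eq_zero_of_pow_eq_zero (n := 3) ?_
    linear_combination -hy
  have x_eq_zero : P 0 = 0 := by
    refine eq_zero_of_pow_eq_zero (n := 3) ?_
    linear_combination hx - P 0 ^ 3 * three_eq_zero
  have w_eq_zero : P 3 = 0 := by
    linear_combination P 3 * three_eq_zero - hw
  ext i
  fin_cases i <;> assumption

/-- Smoothness of the surface `X₁ : −w² = (x²+y²)² + y³z − yz³` (Section 3): over an
algebraically closed field `K` of characteristic 3, the polynomial
`F = w² + (x²+y²)² + y³z − yz³` and its four partial derivatives have no common zero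
with `(x,y,z) ≠ (0,0,0)`. -/
theorem X1_smooth
    (K : Type*) [Field K] [IsAlgClosed K] [CharP K 3]
    (F : MvPolynomial (Fin 4) K)
    (hF : F = (X 3) ^ 2 + ((X 0) ^ 2 + (X 1) ^ 2) ^ 2 + (X 1) ^ 3 * X 2
        - X 1 * (X 2) ^ 3) :
    ¬ ∃ P : Fin 4 → K, ¬ (P 0 = 0 ∧ P 1 = 0 ∧ P 2 = 0) ∧
        eval P F = 0 ∧ ∀ i : Fin 4, eval P (pderiv i F) = 0 := by
  rintro ⟨P, hne, -, hgrad⟩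
  obtain rfl : F = x1Equation K := hF
  exact hne (by simp [X1_smooth_general hgrad])
end

section
/- Let K be an algebraically closed field of characteristic 3 and let F = w² + x⁴ + y³z − yz³ ∈ K[x,y,z,w]. Then there is no point (x₀,y₀,z₀,w₀) ∈ K⁴ with (x₀,y₀,z₀) ≠ (0,0,0) at which F and all four partial derivatives ∂F/∂x, ∂F/∂y, ∂F/∂z, ∂F/∂w vanish simultaneously. -/
open MvPolynomial

/-!
Every monomial of the quartic `x⁴ + y³z − yz³` is a cube times a variable. In characteristic 3
derivations are linear over cubes, so the gradient of `w² + x⁴ + y³z − yz³` is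
`(x³, −z³, y³, −w)`, and in a reduced ring it vanishes only at the origin.
-/

theorem derivation_pow_char_mul {R A M : Type*} [CommSemiring R] [CommSemiring A]
    [AddCommMonoid M] [Algebra R A] [Module A M] [Module R M] (p : ℕ) [CharP A p]
    (D : Derivation R A M) (a b : A) : D (a ^ p * b) = a ^ p • D b := by
  have map_pow_char : D (a ^ p) = 0 := by
    rw [D.leibniz_pow, ← Nat.cast_smul_eq_nsmul A, CharP.cast_eq_zero, zero_smul]
  rw [D.leibniz, map_pow_char, smul_zero, add_zero]

section

variable {R : Type*} [CommRing R] [CharP R 3] {F : MvPolynomial (Fin 4) R}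

theorem pderiv_X2 (hF : F = X 3 ^ 2 + X 0 ^ 4 + X 1 ^ 3 * X 2 - X 1 * X 2 ^ 3) (i : Fin 4) :
    pderiv i F = ![X 0 ^ 3, -X 2 ^ 3, X 1 ^ 3, -X 3] i := by
  have F_eq_cubes_mul : F = X 3 ^ 2 + X 0 ^ 3 * X 0 + X 1 ^ 3 * X 2 - X 2 ^ 3 * X 1 := by
    rw [hF]; ring
  have two_eq_neg_one : (2 : MvPolynomial (Fin 4) R) = -1 := by
    have three_eq_zero : (3 : MvPolynomial (Fin 4) R) = 0 :=
      CharP.ofNat_eq_zero (MvPolynomial (Fin 4) R) 3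
    linear_combination three_eq_zero
  rw [F_eq_cubes_mul, map_sub, map_add, map_add]
  simp only [derivation_pow_char_mul, Derivation.leibniz_pow]
  fin_cases i <;> simp [pderiv_X, two_eq_neg_one]

theorem X2_smooth_general [IsReduced R]
    (hF : F = X 3 ^ 2 + X 0 ^ 4 + X 1 ^ 3 * X 2 - X 1 * X 2 ^ 3) {P : Fin 4 → R}
    (hP : ∀ i, eval P (pderiv i F) = 0) : P = 0 := by
  simp only [pderiv_X2 hF] at hP
  have hx : P 0 ^ 3 = 0 := by simpa using hP 0
  have hz : P 2 ^ 3 = 0 := by simpa using hP 1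
  have hy : P 1 ^ 3 = 0 := by simpa using hP 2
  have hw : P 3 = 0 := by simpa using hP 3
  ext i
  fin_cases i
  exacts [eq_zero_of_pow_eq_zero hx, eq_zero_of_pow_eq_zero hy, eq_zero_of_pow_eq_zero hz, hw]

end

/-- Smoothness of the surface `X₂ : −w² = x⁴ + y³z − yz³` (Section 3): over an
algebraically closed field `K` of characteristic 3, the polynomial
`F = w² + x⁴ + y³z − yz³` and its four partial derivatives have no common zero
with `(x,y,z) ≠ (0,0,0)`. -/
theorem X2_smooth
    (K : Type*) [Field K] [IsAlgClosed K] [CharP K 3]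
    (F : MvPolynomial (Fin 4) K)
    (hF : F = (X 3) ^ 2 + (X 0) ^ 4 + (X 1) ^ 3 * X 2 - X 1 * (X 2) ^ 3) :
    ¬ ∃ P : Fin 4 → K, ¬ (P 0 = 0 ∧ P 1 = 0 ∧ P 2 = 0) ∧
        eval P F = 0 ∧ ∀ i : Fin 4, eval P (pderiv i F) = 0 := by
  rintro ⟨P, hP, -, hgrad⟩
  simp [X2_smooth_general hF hgrad] at hP
end
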